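/- arXiv:1109.3026 — 6 statements merged into one kernel-verified Lean document; each statement's English description precedes it below -/
import Mathlib

section
/- The following three statements are equivalent: (1) the weighted discrete Hilbert transform (a_n) ↦ (z ↦ ∑_{n≥1} a_n v_n/(z−γ_n)) is bounded from ℓ²_v to L²(ℂ,μ); (2) μ is a Carleson measure for 𝓗(Γ,v); (3) both sup_{n≥1} ∫_{Ω_n} v_n/|z−γ_n|² dμ(z) < ∞ and sup_{n≥1} ( (∑_{m=1}^{n} v_m)·(∑_{m=n+1}^∞ ∫_{Ω_m} |z|^{-2} dμ(z)) + (∑_{m=n+1}^∞ v_m/|γ_m|²)·(∑_{m=1}^{n} μ(Ω_m)) ) < ∞ hold. -/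
open MeasureTheory Filter Topology
open scoped ENNReal NNReal

noncomputable section

/-! Sequences are indexed by `ℕ`, with the Lean index `n : ℕ` corresponding to the
paper's index `n + 1` (so `γ 0` is the paper's `γ_1`, `Omega γ 0` is the paper's `Ω_1`,
the paper's partial sum `∑_{m=1}^{n} v_m` is `∑ m ∈ Finset.range (n+1), v m`, and the
paper's tail `∑_{m=n+1}^∞ c_m` is `∑' m : ℕ, c (n+1+m)`). -/

/-- The annular shells `Ω_n` (here `Omega γ 0` is the paper's `Ω_1`). -/
def Omega (γ : ℕ → ℂ) : ℕ → Set ℂ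
  | 0 => {z : ℂ | ‖z‖ < (‖γ 0‖ + ‖γ 1‖) / 2}
  | n + 1 => {z : ℂ | (‖γ n‖ + ‖γ (n + 1)‖) / 2 ≤ ‖z‖ ∧ ‖z‖ < (‖γ (n + 1)‖ + ‖γ (n + 2)‖) / 2}

/-- The sparseness condition `inf_n |γ_{n+1}|/|γ_n| > 1`. -/
def Sparse (γ : ℕ → ℂ) : Prop := ∃ c : ℝ, 1 < c ∧ ∀ n, c * ‖γ n‖ ≤ ‖γ (n + 1)‖

/-- The admissibility condition `∑_n v_n/(1+|γ_n|²) < ∞`. -/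
def Admissible (γ : ℕ → ℂ) (v : ℕ → ℝ) : Prop :=
  Summable fun n => v n / (1 + ‖γ n‖ ^ 2)

/-- Membership in `ℓ²_v`. -/
def MemL2v (v : ℕ → ℝ) (a : ℕ → ℂ) : Prop := Summable fun n => ‖a n‖ ^ 2 * v n

/-- The squared norm `‖a‖²_v = ∑_n |a_n|² v_n`. -/
def normSqV (v : ℕ → ℝ) (a : ℕ → ℂ) : ℝ := ∑' n, ‖a n‖ ^ 2 * v n

/-- The set `(Γ,v)* = {z : ∑_n v_n/|z-γ_n|² < ∞}`. -/
def GammaStar (γ : ℕ → ℂ) (v : ℕ → ℝ) : Set ℂ :=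
  {z : ℂ | Summable fun n => v n / ‖z - γ n‖ ^ 2}

/-- The function of `𝓗(Γ,v)` with coefficient sequence `a`:
`f(z) = ∑_n a_n v_n/(z-γ_n)`. -/
def Hfun (γ : ℕ → ℂ) (v : ℕ → ℝ) (a : ℕ → ℂ) (z : ℂ) : ℂ :=
  ∑' n, a n * (v n : ℂ) / (z - γ n)

/-- `μ` is a Carleson measure for `𝓗(Γ,v)`:
`∫_ℂ |f|² dμ ≤ C ‖a‖²_v` for every `f ∈ 𝓗(Γ,v)` with coefficients `a ∈ ℓ²_v`. -/
def IsCarleson (γ : ℕ → ℂ) (v : ℕ → ℝ) (μ : Measure ℂ) : Prop :=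
  ∃ C : ℝ, 0 < C ∧ ∀ a : ℕ → ℂ, MemL2v v a →
    ∫⁻ z, (‖Hfun γ v a z‖₊ : ℝ≥0∞) ^ 2 ∂μ ≤ ENNReal.ofReal (C * normSqV v a)

/-- The sequence `(a k)` of coefficient sequences converges weakly to zero in `ℓ²_v`:
it is norm bounded and `∑_n a^{(k)}_n v_n conj(b_n) → 0` for every `b ∈ ℓ²_v`. -/
def WeaklyNull (v : ℕ → ℝ) (a : ℕ → ℕ → ℂ) : Prop :=
  (∃ M : ℝ, ∀ k, normSqV v (a k) ≤ M) ∧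
    ∀ b : ℕ → ℂ, MemL2v v b →
      Tendsto (fun k => ∑' n, a k n * (v n : ℂ) * (starRingEnd ℂ) (b n)) atTop (𝓝 0)

/-- `μ` is a compact (vanishing) Carleson measure for `𝓗(Γ,v)`: it is Carleson and
`∫_ℂ |f_k|² dμ → 0` for every weakly null sequence in `𝓗(Γ,v)`. -/
def IsCompactCarleson (γ : ℕ → ℂ) (v : ℕ → ℝ) (μ : Measure ℂ) : Prop :=
  IsCarleson γ v μ ∧
    ∀ a : ℕ → ℕ → ℂ, (∀ k, MemL2v v (a k)) → WeaklyNull v a →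
      Tendsto (fun k => ∫⁻ z, (‖Hfun γ v (a k) z‖₊ : ℝ≥0∞) ^ 2 ∂μ) atTop (𝓝 0)

/-- The local quantity `∫_{Ω_n} v_n/|z-γ_n|² dμ(z)`. -/
def localTerm (γ : ℕ → ℂ) (v : ℕ → ℝ) (μ : Measure ℂ) (n : ℕ) : ℝ≥0∞ :=
  ∫⁻ z in Omega γ n, ENNReal.ofReal (v n / ‖z - γ n‖ ^ 2) ∂μ

/-- The global quantity
`(∑_{m=1}^n v_m)·(∑_{m=n+1}^∞ ∫_{Ω_m} |z|⁻² dμ) + (∑_{m=n+1}^∞ v_m/|γ_m|²)·(∑_{m=1}^n μ(Ω_m))`. -/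
def globalTerm (γ : ℕ → ℂ) (v : ℕ → ℝ) (μ : Measure ℂ) (n : ℕ) : ℝ≥0∞ :=
  ENNReal.ofReal (∑ m ∈ Finset.range (n + 1), v m) *
      (∑' m : ℕ, ∫⁻ z in Omega γ (n + 1 + m), ENNReal.ofReal (1 / ‖z‖ ^ 2) ∂μ) +
    ENNReal.ofReal (∑' m : ℕ, v (n + 1 + m) / ‖γ (n + 1 + m)‖ ^ 2) *
      (∑ m ∈ Finset.range (n + 1), μ (Omega γ m))

lemma abel_aux (w F : ℕ → ℝ) (h0 : F 0 = 0) (N : ℕ) :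
    ∑ n ∈ Finset.range N, w n * F n ^ 2 =
      ∑ n ∈ Finset.range N, (F (n+1) ^ 2 - F n ^ 2) * ∑ k ∈ Finset.Ico (n+1) N, w k := by
  induction N with
  | zero => simp
  | succ N ih =>
    rw [Finset.sum_range_succ, ih, Finset.sum_range_succ]
    have h1 : ∀ n ∈ Finset.range N, (F (n+1) ^ 2 - F n ^ 2) * ∑ k ∈ Finset.Ico (n+1) (N+1), w k
        = (F (n+1) ^ 2 - F n ^ 2) * ∑ k ∈ Finset.Ico (n+1) N, w k
          + (F (n+1) ^ 2 - F n ^ 2) * w N := by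
      intro n hn
      rw [Finset.sum_Ico_succ_top (by have := Finset.mem_range.1 hn; omega)]
      ring
    rw [Finset.sum_congr rfl h1, Finset.sum_add_distrib, ← Finset.sum_mul,
      Finset.sum_range_sub (fun n => F n ^ 2)]
    simp [h0]
    ring

lemma hardy_avg (v b A V : ℕ → ℝ) (hv : ∀ n, 0 < v n)
    (hV : ∀ n, V n = ∑ m ∈ Finset.range (n+1), v m)
    (hA : ∀ n, V n * A n = ∑ m ∈ Finset.range (n+1), b m * v m) (N : ℕ) :
    ∑ n ∈ Finset.range N, v n * A n ^ 2 ≤ 4 * ∑ n ∈ Finset.range N, b n ^ 2 * v n := by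
  have hVp : ∀ n, 0 < V n := fun n => by
    rw [hV]; exact Finset.sum_pos (fun i _ => hv i) ⟨0, by simp⟩
  have key : ∀ N, ∑ n ∈ Finset.range (N+1), (v n * A n ^ 2 - 2 * (A n * v n * b n))
      ≤ - (V N * A N ^ 2) := by
    intro N
    induction N with
    | zero =>
      have h1 := hV 0
      have h2 := hA 0
      simp at h1 h2 ⊢
      rw [h1] at h2 ⊢
      have : A 0 * v 0 * b 0 = A 0 * (v 0 * A 0) := by rw [h2]; ring
      rw [this]; apply le_of_eq; ring
    | succ N ih =>
      rw [Finset.sum_range_succ]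
      have h1 : V (N+1) = V N + v (N+1) := by rw [hV, hV, Finset.sum_range_succ]
      have h2 : V (N+1) * A (N+1) = V N * A N + b (N+1) * v (N+1) := by
        rw [hA, hA, Finset.sum_range_succ]
      have h3 : A (N+1) * v (N+1) * b (N+1) = A (N+1) * (V (N+1) * A (N+1) - V N * A N) := by
        rw [h2]; ring
      rw [h3, h1]
      nlinarith [mul_nonneg (hVp N).le (sq_nonneg (A (N+1) - A N))]
  have key' : ∑ n ∈ Finset.range N, (v n * A n ^ 2 - 2 * (A n * v n * b n)) ≤ 0 := by
    cases N with
    | zero => simp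
    | succ N => exact (key N).trans (by have := mul_nonneg (hVp N).le (sq_nonneg (A N)); linarith)
  have h4 : ∑ n ∈ Finset.range N, (v n * A n ^ 2 - 4 * (b n ^ 2 * v n)) ≤
      ∑ n ∈ Finset.range N, 2 * (v n * A n ^ 2 - 2 * (A n * v n * b n)) := by
    apply Finset.sum_le_sum
    intro n _
    nlinarith [mul_nonneg (hv n).le (sq_nonneg (A n - 2 * b n))]
  rw [← Finset.mul_sum, Finset.sum_sub_distrib, ← Finset.mul_sum] at h4
  linarith

lemma hardy (v w b : ℕ → ℝ) (hv : ∀ n, 0 < v n) (hb : ∀ n, 0 ≤ b n)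
    (B : ℝ) (N : ℕ)
    (h : ∀ n < N, (∑ m ∈ Finset.range (n+1), v m) * (∑ k ∈ Finset.Ico (n+1) N, w k) ≤ B)
    (hB : 0 ≤ B) :
    ∑ n ∈ Finset.range N, w n * (∑ m ∈ Finset.range n, b m * v m) ^ 2 ≤
      5 * B * ∑ n ∈ Finset.range N, b n ^ 2 * v n := by
  set V : ℕ → ℝ := fun n => ∑ m ∈ Finset.range (n+1), v m with hV
  have hVp : ∀ n, 0 < V n := fun n => Finset.sum_pos (fun i _ => hv i) ⟨0, by simp⟩
  set F : ℕ → ℝ := fun n => ∑ m ∈ Finset.range n, b m * v m with hF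
  set A : ℕ → ℝ := fun n => F (n+1) / V n with hA
  have hVA : ∀ n, V n * A n = F (n+1) := fun n => by
    simp only [hA]; field_simp [(hVp n).ne']
  have hF0 : ∀ n, 0 ≤ F n := fun n => Finset.sum_nonneg fun i _ => mul_nonneg (hb i) (hv i).le
  have hA0 : ∀ n, 0 ≤ A n := fun n => div_nonneg (hF0 _) (hVp n).le
  have h1 := hardy_avg v b A V hv (fun _ => rfl) hVA N
  rw [abel_aux w F (by simp [hF])]
  have h2 : ∀ n ∈ Finset.range N, (F (n+1) ^ 2 - F n ^ 2) * ∑ k ∈ Finset.Ico (n+1) N, w k ≤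
      B * (v n * A n ^ 2 + b n ^ 2 * v n) := by
    intro n hn
    have hW := h n (Finset.mem_range.1 hn)
    have hs : F (n+1) = F n + b n * v n := by simp only [hF]; rw [Finset.sum_range_succ]
    have hbv := mul_nonneg (hb n) (hv n).le
    set W := ∑ k ∈ Finset.Ico (n+1) N, w k
    have e1 : 0 ≤ F (n+1) ^ 2 - F n ^ 2 := by nlinarith [hF0 n]
    have e2 : F (n+1) ^ 2 - F n ^ 2 ≤ V n * (2 * (b n * v n * A n)) := by
      have : V n * (2 * (b n * v n * A n)) = 2 * (b n * v n) * (V n * A n) := by ring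
      rw [this, hVA]
      have e : F n = F (n+1) - b n * v n := by linarith
      rw [e]; nlinarith
    have e3 : 2 * (b n * v n * A n) ≤ v n * A n ^ 2 + b n ^ 2 * v n := by
      nlinarith [mul_nonneg (hv n).le (sq_nonneg (A n - b n))]
    have e4 : 0 ≤ 2 * (b n * v n * A n) := by have := hA0 n; positivity
    rcases le_total 0 W with hW0 | hW0
    · calc _ ≤ V n * (2 * (b n * v n * A n)) * W := mul_le_mul_of_nonneg_right e2 hW0
        _ = (V n * W) * (2 * (b n * v n * A n)) := by ring
        _ ≤ B * (2 * (b n * v n * A n)) := mul_le_mul_of_nonneg_right hW e4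
        _ ≤ _ := mul_le_mul_of_nonneg_left e3 hB
    · exact (mul_nonpos_of_nonneg_of_nonpos e1 hW0).trans (mul_nonneg hB (e4.trans e3))
  refine (Finset.sum_le_sum h2).trans ?_
  rw [← Finset.mul_sum, Finset.sum_add_distrib]
  have := mul_le_mul_of_nonneg_left h1 hB
  linarith

lemma hardy_dual (t u b : ℕ → ℝ) (ht : ∀ n, 0 < t n) (hb : ∀ n, 0 ≤ b n)
    (B : ℝ) (N : ℕ)
    (h : ∀ n < N, (∑ m ∈ Finset.Ico (n+1) N, t m) * (∑ k ∈ Finset.range (n+1), u k) ≤ B)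
    (hB : 0 ≤ B) :
    ∑ n ∈ Finset.range N, u n * (∑ m ∈ Finset.Ico (n+1) N, b m * t m) ^ 2 ≤
      5 * B * ∑ n ∈ Finset.range N, b n ^ 2 * t n := by
  have r1 : ∀ f : ℕ → ℝ, ∀ n < N, ∑ m ∈ Finset.Ico (n+1) N, f m =
      ∑ m ∈ Finset.range (N - 1 - n), f (N - 1 - m) := by
    intro f n hn
    refine Finset.sum_nbij' (fun m => N - 1 - m) (fun m => N - 1 - m) ?_ ?_ ?_ ?_ ?_ <;>
      intro m hm <;> simp only [Finset.mem_Ico, Finset.mem_range] at hm ⊢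
    any_goals omega
    congr 1; omega
  have r2 : ∀ f : ℕ → ℝ, ∀ n < N, ∑ m ∈ Finset.Ico (n+1) N, f (N - 1 - m) =
      ∑ m ∈ Finset.range (N - 1 - n), f m := by
    intro f n hn
    rw [r1 _ n hn]
    refine Finset.sum_congr rfl fun m hm => ?_
    simp only [Finset.mem_range] at hm
    congr 1; omega
  have H := hardy (fun i => t (N-1-i)) (fun i => u (N-1-i)) (fun i => b (N-1-i))
    (fun _ => ht _) (fun _ => hb _) B N ?_ hB
  · rw [Finset.sum_range_reflect (fun n => b n ^ 2 * t n)] at H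
    refine le_trans (le_of_eq ?_) H
    rw [← Finset.sum_range_reflect]
    refine Finset.sum_congr rfl fun n hn => ?_
    simp only [Finset.mem_range] at hn
    rw [r1 _ _ (by omega)]
    congr 4; omega
  · intro n hn
    rw [r2 _ n hn]
    rcases Nat.eq_or_lt_of_le (show n + 1 ≤ N from hn) with h' | h'
    · have : N - 1 - n = 0 := by omega
      simp [this, hB]
    · have := h (N - 1 - n - 1) (by omega)
      rw [r1 _ _ (by omega)] at this
      have e1 : N - 1 - (N - 1 - n - 1) = n + 1 := by omega
      have e2 : N - 1 - n - 1 + 1 = N - 1 - n := by omega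
      rw [e1, e2] at this
      exact this

lemma om_lower {γ : ℕ → ℂ} (hm : Monotone fun n => ‖γ n‖) {n m : ℕ} (h : m < n) {z : ℂ}
    (hz : z ∈ Omega γ n) : (‖γ m‖ + ‖γ (m+1)‖) / 2 ≤ ‖z‖ := by
  cases n with
  | zero => omega
  | succ n =>
    have h1 : ‖γ m‖ ≤ ‖γ n‖ := hm (by omega)
    have h2 : ‖γ (m+1)‖ ≤ ‖γ (n+1)‖ := hm (by omega)
    have := hz.1
    linarith

lemma om_upper {γ : ℕ → ℂ} (hm : Monotone fun n => ‖γ n‖) {n m : ℕ} (h : n ≤ m) {z : ℂ}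
    (hz : z ∈ Omega γ n) : ‖z‖ < (‖γ m‖ + ‖γ (m+1)‖) / 2 := by
  have h1 : ‖γ n‖ ≤ ‖γ m‖ := hm h
  have h2 : ‖γ (n+1)‖ ≤ ‖γ (m+1)‖ := hm (by omega)
  have : ‖z‖ < (‖γ n‖ + ‖γ (n+1)‖) / 2 := by
    cases n with
    | zero => exact hz
    | succ n => exact hz.2
  linarith

lemma om_meas (γ : ℕ → ℂ) (n : ℕ) : MeasurableSet (Omega γ n) := by
  cases n with
  | zero => exact measurableSet_lt measurable_norm measurable_const
  | succ n =>
    exact (measurableSet_le measurable_const measurable_norm).inter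
      (measurableSet_lt measurable_norm measurable_const)

lemma om_disj {γ : ℕ → ℂ} (hm : Monotone fun n => ‖γ n‖) {n k : ℕ} (h : n ≠ k) :
    Disjoint (Omega γ n) (Omega γ k) := by
  rw [Set.disjoint_left]
  intro z hz hz'
  rcases lt_or_gt_of_ne h with h | h
  · have := om_upper hm le_rfl hz
    have := om_lower hm h hz'
    linarith
  · have := om_upper hm le_rfl hz'
    have := om_lower hm h hz
    linarith

lemma om_cover {γ : ℕ → ℂ} (h0 : γ 0 ≠ 0) (hs : Sparse γ) :
    ⋃ n, Omega γ n = Set.univ := by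
  obtain ⟨c, hc, hcs⟩ := hs
  have hp : ∀ n, c ^ n * ‖γ 0‖ ≤ ‖γ n‖ := by
    intro n
    induction n with
    | zero => simp
    | succ n ih =>
      refine le_trans ?_ (hcs n)
      rw [pow_succ', mul_assoc]
      exact mul_le_mul_of_nonneg_left ih (by linarith)
  have hpos : 0 < ‖γ 0‖ := norm_pos_iff.2 h0
  rw [Set.eq_univ_iff_forall]
  intro z
  have hex : ∃ n, ‖z‖ < (‖γ n‖ + ‖γ (n+1)‖) / 2 := by
    obtain ⟨n, hn⟩ := pow_unbounded_of_one_lt (‖z‖ / ‖γ 0‖) hc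
    rw [div_lt_iff₀ hpos] at hn
    refine ⟨n, ?_⟩
    have := hp n
    have h2 := hcs n
    nlinarith [norm_nonneg (γ n)]
  classical
  rw [Set.mem_iUnion]
  refine ⟨Nat.find hex, ?_⟩
  have h1 := Nat.find_spec hex
  have h2 : ∀ m < Nat.find hex, _ := fun m hm => Nat.find_min hex hm
  generalize Nat.find hex = k at h1 h2
  cases k with
  | zero => exact h1
  | succ k => exact ⟨not_lt.1 (h2 k (by omega)), h1⟩

lemma re_half {w : ℂ} (hw : ‖w‖ ≤ 1) (h1 : w ≠ 1) : 1 / 2 ≤ (1 / (1 - w)).re := by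
  have hne : (1 - w) ≠ 0 := sub_ne_zero.2 (Ne.symm h1)
  have hpos : 0 < Complex.normSq (1 - w) := Complex.normSq_pos.2 hne
  have h2 : Complex.normSq w ≤ 1 := by
    rw [Complex.normSq_eq_norm_sq]; nlinarith [norm_nonneg w]
  rw [one_div (1 - w), Complex.inv_re, le_div_iff₀ hpos]
  simp only [Complex.normSq_apply, Complex.sub_re, Complex.sub_im, Complex.one_re,
    Complex.one_im] at *
  nlinarith

lemma summ_t {γ : ℕ → ℂ} {v : ℕ → ℝ} (hγ_ne : ∀ n, γ n ≠ 0)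
    (hm : Monotone fun n => ‖γ n‖) (hv : ∀ n, 0 < v n) (hadm : Admissible γ v) :
    Summable fun n => v n / ‖γ n‖ ^ 2 := by
  have hp : ∀ n, 0 < ‖γ n‖ := fun n => norm_pos_iff.2 (hγ_ne n)
  refine Summable.of_nonneg_of_le (fun n => div_nonneg (hv n).le (sq_nonneg _)) (fun n => ?_)
    (hadm.mul_left (1 / ‖γ 0‖ ^ 2 + 1))
  have h0 : ‖γ 0‖ ≤ ‖γ n‖ := hm (Nat.zero_le n)
  have h1 := hp 0
  have h2 := hp n
  have h3 := hv n
  have h4 : 1 ≤ ‖γ n‖ ^ 2 / ‖γ 0‖ ^ 2 := by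
    rw [one_le_div (by positivity)]; gcongr
  rw [mul_div_assoc', div_le_div_iff₀ (by positivity) (by positivity)]
  have : (1 / ‖γ 0‖ ^ 2 + 1) * v n * ‖γ n‖ ^ 2 =
    v n * (‖γ n‖ ^ 2 / ‖γ 0‖ ^ 2 + ‖γ n‖ ^ 2) := by ring
  rw [this]
  gcongr

lemma far_low {γ : ℕ → ℂ} (hm : Monotone fun n => ‖γ n‖) {c : ℝ} (hc : 1 < c)
    (hs : ∀ n, c * ‖γ n‖ ≤ ‖γ (n + 1)‖) {n m : ℕ} (h : m < n) {z : ℂ}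
    (hz : z ∈ Omega γ n) : (c - 1) / (2 * (c + 1)) * ‖z‖ ≤ ‖z - γ m‖ := by
  have h1 := om_lower hm h hz
  have h2 := hs m
  have h3 := norm_sub_norm_le z (γ m)
  have h4 : (1 + c) * ‖γ m‖ ≤ 2 * ‖z‖ := by linarith
  rw [div_mul_eq_mul_div, div_le_iff₀ (by linarith)]
  nlinarith [norm_nonneg z, norm_nonneg (γ m)]

lemma far_high {γ : ℕ → ℂ} (hm : Monotone fun n => ‖γ n‖) {c : ℝ} (hc : 1 < c)
    (hs : ∀ n, c * ‖γ n‖ ≤ ‖γ (n + 1)‖) {n m : ℕ} (h : n < m) {z : ℂ}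
    (hz : z ∈ Omega γ n) : (c - 1) / (2 * (c + 1)) * ‖γ m‖ ≤ ‖z - γ m‖ := by
  obtain ⟨m, rfl⟩ : ∃ k, m = k + 1 := ⟨m - 1, by omega⟩
  have h1 := om_upper hm (Nat.le_of_lt_succ h) hz
  have h2 := hs m
  have h3 := norm_sub_norm_le (γ (m+1)) z
  rw [norm_sub_rev] at h3
  rw [div_mul_eq_mul_div, div_le_iff₀ (by linarith)]
  nlinarith [norm_nonneg z, norm_nonneg (γ m)]

/-- Condition (1) with its constant. -/
def Bdd1 (γ : ℕ → ℂ) (v : ℕ → ℝ) (μ : Measure ℂ) (C : ℝ) : Prop :=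
  ∀ a : ℕ → ℂ, MemL2v v a →
    ∫⁻ z, (‖Hfun γ v a z‖₊ : ℝ≥0∞) ^ 2 ∂μ ≤ ENNReal.ofReal (C * normSqV v a)

lemma local_le {γ : ℕ → ℂ} {v : ℕ → ℝ} (hv : ∀ n, 0 < v n) {μ : Measure ℂ} {C : ℝ}
    (H : Bdd1 γ v μ C) (n : ℕ) : localTerm γ v μ n ≤ ENNReal.ofReal C := by
  have hn : HasSum (fun k => ‖(Pi.single n 1 : ℕ → ℂ) k‖ ^ 2 * v k) (v n) := by
    convert hasSum_single n ?_ using 1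
    · simp
    · intro k hk; simp [hk]
  have h1 := H (Pi.single n 1) hn.summable
  rw [normSqV, hn.tsum_eq] at h1
  have hf : ∀ z, Hfun γ v (Pi.single n 1) z = v n / (z - γ n) := by
    intro z
    rw [Hfun, tsum_eq_single n]
    · simp
    · intro k hk; simp [hk]
  have h2 : ENNReal.ofReal (v n) * localTerm γ v μ n ≤ ENNReal.ofReal (v n) * ENNReal.ofReal C := by
    rw [← ENNReal.ofReal_mul (hv n).le, mul_comm (v n) C]
    refine le_trans ?_ h1
    rw [localTerm, ← lintegral_const_mul' _ _ ENNReal.ofReal_ne_top]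
    refine (setLIntegral_le_lintegral _ _).trans (lintegral_mono fun z => ?_)
    rw [hf, ← ENNReal.ofReal_mul (hv n).le, ← enorm_eq_nnnorm, ← ofReal_norm,
      ← ENNReal.ofReal_pow (norm_nonneg _)]
    apply ENNReal.ofReal_le_ofReal
    rw [norm_div, div_pow]
    simp [abs_of_pos (hv n)]
    apply le_of_eq; ring
  exact (ENNReal.mul_le_mul_iff_right (by simp [hv n]) ENNReal.ofReal_ne_top).1 h2

lemma global1_le {γ : ℕ → ℂ} {v : ℕ → ℝ} (hγ_ne : ∀ n, γ n ≠ 0)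
    (hm : Monotone fun n => ‖γ n‖) (hs : Sparse γ) (hv : ∀ n, 0 < v n) {μ : Measure ℂ} {C : ℝ}
    (H : Bdd1 γ v μ C) (n : ℕ) :
    ENNReal.ofReal (∑ m ∈ Finset.range (n + 1), v m) *
      (∑' m : ℕ, ∫⁻ z in Omega γ (n + 1 + m), ENNReal.ofReal (1 / ‖z‖ ^ 2) ∂μ) ≤
      ENNReal.ofReal (4 * C) := by
  set V := ∑ m ∈ Finset.range (n + 1), v m with hV
  have hVp : 0 < V := Finset.sum_pos (fun i _ => hv i) ⟨0, by simp⟩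
  set a : ℕ → ℂ := fun k => if k < n + 1 then 1 else 0 with ha
  have ha1 : ∀ k, k < n + 1 → a k = 1 := fun k hk => if_pos hk
  have ha0 : ∀ k, ¬ k < n + 1 → a k = 0 := fun k hk => if_neg hk
  have hn : HasSum (fun k => ‖a k‖ ^ 2 * v k) V := by
    have e : V = ∑ k ∈ Finset.range (n+1), ‖a k‖ ^ 2 * v k := by
      refine Finset.sum_congr rfl fun k hk => ?_
      simp [ha1 k (Finset.mem_range.1 hk)]
    rw [e]
    apply hasSum_sum_of_ne_finset_zero
    intro k hk; simp only [Finset.mem_range] at hk; simp [ha0 k hk]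
  have h1 := H a hn.summable
  rw [normSqV, hn.tsum_eq] at h1
  have hf : ∀ z, Hfun γ v a z = ∑ m ∈ Finset.range (n+1), (v m : ℂ) / (z - γ m) := by
    intro z
    rw [Hfun, tsum_eq_sum (s := Finset.range (n+1))]
    · refine Finset.sum_congr rfl fun k hk => ?_
      simp [ha1 k (Finset.mem_range.1 hk)]
    · intro k hk; simp only [Finset.mem_range] at hk; simp [ha0 k hk]
  rw [← lintegral_iUnion (fun i => om_meas γ _)
    (fun i j hij => om_disj hm (by omega))]
  have h2 : ENNReal.ofReal (V * V / 4) *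
      ∫⁻ z in ⋃ i, Omega γ (n + 1 + i), ENNReal.ofReal (1 / ‖z‖ ^ 2) ∂μ ≤
      ENNReal.ofReal (C * V) := by
    refine le_trans ?_ h1
    rw [← lintegral_const_mul' _ _ ENNReal.ofReal_ne_top]
    refine le_trans ?_ (setLIntegral_le_lintegral (⋃ i, Omega γ (n + 1 + i)) _)
    refine setLIntegral_mono' (MeasurableSet.iUnion fun i => om_meas γ _) fun z hz => ?_
    obtain ⟨i, hi⟩ := Set.mem_iUnion.1 hz
    rw [hf, ← ENNReal.ofReal_mul (by positivity), ← enorm_eq_nnnorm, ← ofReal_norm,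
      ← ENNReal.ofReal_pow (norm_nonneg _)]
    apply ENNReal.ofReal_le_ofReal
    have hlow : ∀ m ∈ Finset.range (n+1), ‖γ m‖ < ‖z‖ := by
      intro m hm'
      have := Finset.mem_range.1 hm'
      have h3 := om_lower hm (show m < n + 1 + i by omega) hi
      obtain ⟨c, hc, hcs⟩ := hs
      have h4 := hcs m
      have := norm_pos_iff.2 (hγ_ne m)
      nlinarith
    have hz0 : 0 < ‖z‖ := (norm_nonneg _).trans_lt (hlow 0 (by simp))
    have hz0' : z ≠ 0 := norm_pos_iff.1 hz0
    have key : V / 2 ≤ ‖z‖ * ‖∑ m ∈ Finset.range (n+1), (v m : ℂ) / (z - γ m)‖ := by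
      rw [← norm_mul]
      refine le_trans ?_ (Complex.re_le_norm _)
      rw [Finset.mul_sum, Complex.re_sum, hV, Finset.sum_div]
      refine Finset.sum_le_sum fun m hm' => ?_
      have hl := hlow m hm'
      have hne : z - γ m ≠ 0 := by
        intro h; rw [sub_eq_zero] at h; rw [h] at hl; exact lt_irrefl _ hl
      have e : z * ((v m : ℂ) / (z - γ m)) = (v m : ℂ) * (1 / (1 - γ m / z)) := by
        have : 1 - γ m / z = (z - γ m) / z := by field_simp
        rw [this]; field_simp
      rw [e, Complex.re_ofReal_mul]
      have := re_half (w := γ m / z) (by rw [norm_div, div_le_one hz0]; exact hl.le) (by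
        intro h; rw [div_eq_one_iff_eq hz0'] at h; rw [h] at hl; exact lt_irrefl _ hl)
      have := mul_le_mul_of_nonneg_left this (hv m).le
      linarith
    have k2 := pow_le_pow_left₀ (by positivity) key 2
    rw [mul_one_div, div_le_iff₀ (by positivity)]
    nlinarith
  have h3 : ENNReal.ofReal (V / 4) * (ENNReal.ofReal V *
      ∫⁻ z in ⋃ i, Omega γ (n + 1 + i), ENNReal.ofReal (1 / ‖z‖ ^ 2) ∂μ) ≤
      ENNReal.ofReal (V / 4) * ENNReal.ofReal (4 * C) := by
    rw [← mul_assoc, ← ENNReal.ofReal_mul (by positivity), ← ENNReal.ofReal_mul (by positivity)]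
    convert h2 using 2 <;> ring_nf
  exact (ENNReal.mul_le_mul_iff_right (by simp [hVp]) ENNReal.ofReal_ne_top).1 h3

lemma global2_le {γ : ℕ → ℂ} {v : ℕ → ℝ} (hγ_ne : ∀ n, γ n ≠ 0)
    (hm : Monotone fun n => ‖γ n‖) (hs : Sparse γ) (hv : ∀ n, 0 < v n)
    (hadm : Admissible γ v) {μ : Measure ℂ} {C : ℝ}
    (H : Bdd1 γ v μ C) (n : ℕ) :
    ENNReal.ofReal (∑' m : ℕ, v (n + 1 + m) / ‖γ (n + 1 + m)‖ ^ 2) *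
      (∑ m ∈ Finset.range (n + 1), μ (Omega γ m)) ≤
      ENNReal.ofReal (4 * C) := by
  have hst := summ_t hγ_ne hm hv hadm
  have hγp : ∀ n, 0 < ‖γ n‖ := fun n => norm_pos_iff.2 (hγ_ne n)
  have htp : ∀ n, 0 < v n / ‖γ n‖ ^ 2 := fun n => div_pos (hv n) (pow_pos (hγp n) 2)
  have hst' : Summable fun m => v (n + 1 + m) / ‖γ (n + 1 + m)‖ ^ 2 :=
    hst.comp_injective (add_right_injective (n+1))
  set T := ∑' m : ℕ, v (n + 1 + m) / ‖γ (n + 1 + m)‖ ^ 2 with hT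
  have hTp : 0 < T := hst'.tsum_pos (fun m => (htp _).le) 0 (htp _)
  set a : ℕ → ℂ := fun k => if k < n + 1 then 0 else γ k / (‖γ k‖ : ℂ) ^ 2 with ha
  have ha0 : ∀ k, k < n + 1 → a k = 0 := fun k hk => if_pos hk
  have ha1 : ∀ k, ¬ k < n + 1 → a k = γ k / (‖γ k‖ : ℂ) ^ 2 := fun k hk => if_neg hk
  have hz0 : ∀ (f : ℕ → ℝ) (s : ℝ), (∀ k < n + 1, f k = 0) →
      HasSum (fun m => f (n + 1 + m)) s → HasSum f s := by
    intro f s h1 h2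
    have h2' : HasSum (fun m => f (m + (n + 1))) s := by
      convert h2 using 2; rw [add_comm]
    have := (hasSum_nat_add_iff (n+1)).1 h2'
    rwa [Finset.sum_eq_zero (fun i hi => h1 i (Finset.mem_range.1 hi)), add_zero] at this
  have hn : HasSum (fun k => ‖a k‖ ^ 2 * v k) T := by
    apply hz0
    · intro k hk; simp [ha0 k hk]
    · convert hst'.hasSum using 2 with m
      have h' := hγp (n+1+m)
      rw [ha1 _ (by omega)]
      simp
      field_simp
  have h1 := H a hn.summable
  rw [normSqV, hn.tsum_eq] at h1
  rw [← measure_biUnion_finset (fun i _ j _ hij => om_disj hm hij) (fun i _ => om_meas γ _)]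
  have h2 : ENNReal.ofReal (T * T / 4) *
      μ (⋃ i ∈ Finset.range (n+1), Omega γ i) ≤
      ENNReal.ofReal (C * T) := by
    refine le_trans ?_ h1
    rw [← setLIntegral_const]
    refine le_trans ?_ (setLIntegral_le_lintegral (⋃ i ∈ Finset.range (n+1), Omega γ i) _)
    refine setLIntegral_mono' (Finset.measurableSet_biUnion _ fun i _ => om_meas γ _)
      fun z hz => ?_
    simp only [Set.mem_iUnion] at hz
    obtain ⟨i, hi', hi⟩ := hz
    have hi' := Finset.mem_range.1 hi'
    rw [← enorm_eq_nnnorm, ← ofReal_norm, ← ENNReal.ofReal_pow (norm_nonneg _)]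
    apply ENNReal.ofReal_le_ofReal
    obtain ⟨c, hc, hcs⟩ := hs
    have hup : ∀ m, n < m → ‖z‖ < ‖γ m‖ := by
      intro m hm'
      have h3 := om_upper hm (show i ≤ m - 1 by omega) hi
      rw [Nat.sub_add_cancel (by omega)] at h3
      have : ‖γ (m - 1)‖ ≤ ‖γ m‖ := hm (by omega)
      linarith
    set δ := (c - 1) / (2 * (c + 1)) with hδ
    have hδp : 0 < δ := div_pos (by linarith) (by linarith)
    have hsum : Summable fun k => a k * (v k : ℂ) / (z - γ k) := by
      refine Summable.of_norm_bounded (hst.mul_left (1 / δ)) fun k => ?_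
      by_cases hk : k < n + 1
      · simp only [ha, hk, if_true]; simp only [zero_mul, zero_div, norm_zero]
        have := htp k
        positivity
      · have hk' := far_high hm hc hcs (show i < k by omega) hi
        have h' := hγp k
        simp only [ha, hk, if_false]
        rw [norm_div, norm_mul, norm_div]
        simp only [norm_pow, Complex.norm_real, norm_norm, Real.norm_of_nonneg (hv k).le]
        have h5 : 0 < δ * ‖γ k‖ := by positivity
        have h6 := hv k
        calc _ ≤ ‖γ k‖ / ‖γ k‖ ^ 2 * v k / (δ * ‖γ k‖) := by gcongr
          _ = _ := by field_simp
    have key : T / 2 ≤ ‖Hfun γ v a z‖ := by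
      rw [← norm_neg]
      refine le_trans ?_ (Complex.re_le_norm _)
      have hre := (Complex.hasSum_re hsum.hasSum).neg
      have hle := hasSum_le (f := fun k => (if k < n + 1 then 0 else v k / ‖γ k‖ ^ 2 / 2))
        (a₁ := T / 2) ?_ (hz0 _ _ ?_ ?_) hre
      · exact hle
      · intro k
        by_cases hk : k < n + 1
        · simp only [hk, if_true]; simp [ha0 k hk]
        · simp only [ha, hk, if_false]
          have hl := hup k (by omega)
          have hne : z - γ k ≠ 0 := by
            intro h; rw [sub_eq_zero] at h; rw [h] at hl; exact lt_irrefl _ hl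
          have hgk := hγ_ne k
          have hne2 : (‖γ k‖ : ℂ) ≠ 0 := by exact_mod_cast (hγp k).ne'
          have e : γ k / (‖γ k‖ : ℂ) ^ 2 * (v k : ℂ) / (z - γ k) =
              -(((v k / ‖γ k‖ ^ 2 : ℝ) : ℂ) * (1 / (1 - z / γ k))) := by
            have h1 : 1 - z / γ k = -((z - γ k) / γ k) := by field_simp; ring
            rw [h1]; push_cast; field_simp
          rw [e, Complex.neg_re, neg_neg, Complex.re_ofReal_mul]
          have := re_half (w := z / γ k) (by rw [norm_div, div_le_one (hγp k)]; exact hl.le) (by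
            intro h; rw [div_eq_one_iff_eq hgk] at h; rw [h] at hl; exact lt_irrefl _ hl)
          have := mul_le_mul_of_nonneg_left this (htp k).le
          linarith
      · intro k hk; simp [hk]
      · have hh : ∀ m, ¬ (n + 1 + m < n + 1) := fun m => by omega
        simp only [hh, if_false]
        exact hst'.hasSum.div_const 2
    have k2 := pow_le_pow_left₀ (by positivity) key 2
    nlinarith
  have h3 : ENNReal.ofReal (T / 4) * (ENNReal.ofReal T *
      μ (⋃ i ∈ Finset.range (n+1), Omega γ i)) ≤
      ENNReal.ofReal (T / 4) * ENNReal.ofReal (4 * C) := by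
    rw [← mul_assoc, ← ENNReal.ofReal_mul (by positivity), ← ENNReal.ofReal_mul (by positivity)]
    convert h2 using 2 <;> ring_nf
  exact (ENNReal.mul_le_mul_iff_right (by simp [hTp]) ENNReal.ofReal_ne_top).1 h3

lemma hardy1_enn (v b : ℕ → ℝ) (hv : ∀ n, 0 < v n) (hb : ∀ n, 0 ≤ b n) (w : ℕ → ℝ≥0∞)
    (M : ℝ≥0∞) (hM : M ≠ ⊤)
    (h : ∀ n, ENNReal.ofReal (∑ m ∈ Finset.range (n+1), v m) * ∑' m, w (n + 1 + m) ≤ M)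
    (hs : Summable fun n => b n ^ 2 * v n) :
    ∑' n, ENNReal.ofReal ((∑ m ∈ Finset.range n, b m * v m) ^ 2) * w n ≤
      ENNReal.ofReal (5 * M.toReal * ∑' n, b n ^ 2 * v n) := by
  have hVp : ∀ n, 0 < ∑ m ∈ Finset.range (n+1), v m :=
    fun n => Finset.sum_pos (fun i _ => hv i) ⟨0, by simp⟩
  have htop : ∀ n, ∑' m, w (n + 1 + m) ≠ ⊤ := by
    intro n hn
    have := h n
    rw [hn, ENNReal.mul_top (by simpa using hVp n)] at this
    exact hM (top_le_iff.1 this)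
  have hw : ∀ n, w (n+1) ≠ ⊤ := by
    intro n
    exact ne_top_of_le_ne_top (htop n) (by simpa using ENNReal.le_tsum (f := fun m => w (n+1+m)) 0)
  refine ENNReal.tsum_le_of_sum_range_le fun N => ?_
  have H := hardy v (fun n => (w n).toReal) b hv hb M.toReal N ?_ ENNReal.toReal_nonneg
  · have e : ∑ n ∈ Finset.range N, ENNReal.ofReal ((∑ m ∈ Finset.range n, b m * v m) ^ 2) * w n =
        ENNReal.ofReal (∑ n ∈ Finset.range N,
          (w n).toReal * (∑ m ∈ Finset.range n, b m * v m) ^ 2) := by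
      rw [ENNReal.ofReal_sum_of_nonneg
        (fun i _ => mul_nonneg ENNReal.toReal_nonneg (sq_nonneg _))]
      refine Finset.sum_congr rfl fun n _ => ?_
      cases n with
      | zero => simp
      | succ n =>
        rw [mul_comm, ENNReal.ofReal_mul ENNReal.toReal_nonneg, ENNReal.ofReal_toReal (hw n)]
    rw [e]
    apply ENNReal.ofReal_le_ofReal
    refine H.trans ?_
    have := ENNReal.toReal_nonneg (a := M)
    gcongr
    exact hs.sum_le_tsum _ (fun i _ => mul_nonneg (sq_nonneg _) (hv i).le)
  · intro n hn
    have h1 : ∑ k ∈ Finset.Ico (n+1) N, (w k).toReal ≤ (∑' m, w (n + 1 + m)).toReal := by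
      rw [Finset.sum_Ico_eq_sum_range, ← ENNReal.toReal_sum]
      · exact ENNReal.toReal_mono (htop n) (ENNReal.sum_le_tsum _)
      · intro i _
        have := hw (n + i)
        rwa [show n + i + 1 = n + 1 + i by omega] at this
    refine (mul_le_mul_of_nonneg_left h1 (hVp n).le).trans ?_
    have := ENNReal.toReal_mono hM (h n)
    rwa [ENNReal.toReal_mul, ENNReal.toReal_ofReal (hVp n).le] at this

lemma hardy2_enn (t b : ℕ → ℝ) (ht : ∀ n, 0 < t n) (hb : ∀ n, 0 ≤ b n) (u : ℕ → ℝ≥0∞)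
    (M : ℝ≥0∞) (hM : M ≠ ⊤) (hst : Summable t)
    (h : ∀ n, ENNReal.ofReal (∑' m, t (n + 1 + m)) * ∑ m ∈ Finset.range (n+1), u m ≤ M)
    (hs : Summable fun n => b n ^ 2 * t n) (hbt : Summable fun n => b n * t n) :
    ∑' n, ENNReal.ofReal ((∑' m, b (n + 1 + m) * t (n + 1 + m)) ^ 2) * u n ≤
      ENNReal.ofReal (5 * M.toReal * ∑' n, b n ^ 2 * t n) := by
  have hst' : ∀ n, Summable fun m => t (n + 1 + m) := fun n =>
    hst.comp_injective (add_right_injective (n+1))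
  have hbt' : ∀ n, Summable fun m => b (n + 1 + m) * t (n + 1 + m) := fun n =>
    hbt.comp_injective (add_right_injective (n+1))
  have hTp : ∀ n, 0 < ∑' m, t (n + 1 + m) := fun n =>
    (hst' n).tsum_pos (fun m => (ht _).le) 0 (ht _)
  have htop : ∀ n, ∑ m ∈ Finset.range (n+1), u m ≠ ⊤ := by
    intro n hn
    have := h n
    rw [hn, ENNReal.mul_top (by simpa using hTp n)] at this
    exact hM (top_le_iff.1 this)
  have hu : ∀ n, u n ≠ ⊤ := by
    intro n
    exact ne_top_of_le_ne_top (htop n)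
      (Finset.single_le_sum (f := u) (fun _ _ => zero_le) (by simp))
  refine ENNReal.tsum_le_of_sum_range_le fun N => ?_
  have H : ∀ K, N ≤ K → ∑ n ∈ Finset.range N, (u n).toReal *
      (∑ m ∈ Finset.range (K - (n+1)), b (n + 1 + m) * t (n + 1 + m)) ^ 2 ≤
      5 * M.toReal * ∑' n, b n ^ 2 * t n := by
    intro K hK
    have H := hardy_dual t (fun n => (u n).toReal) b ht hb M.toReal K ?_ ENNReal.toReal_nonneg
    · have hM0 := ENNReal.toReal_nonneg (a := M)
      calc _ = ∑ n ∈ Finset.range N, (u n).toReal *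
              (∑ m ∈ Finset.Ico (n+1) K, b m * t m) ^ 2 := by
            refine Finset.sum_congr rfl fun n _ => ?_
            rw [Finset.sum_Ico_eq_sum_range]
        _ ≤ ∑ n ∈ Finset.range K, (u n).toReal *
              (∑ m ∈ Finset.Ico (n+1) K, b m * t m) ^ 2 := by
            apply Finset.sum_le_sum_of_subset_of_nonneg
            · intro x hx; simp only [Finset.mem_range] at *; omega
            · intro i _ _; exact mul_nonneg ENNReal.toReal_nonneg (sq_nonneg _)
        _ ≤ _ := H
        _ ≤ _ := by
            gcongr
            exact hs.sum_le_tsum _ (fun i _ => mul_nonneg (sq_nonneg _) (ht i).le)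
    · intro n hn
      have h1 : ∑ k ∈ Finset.Ico (n+1) K, t k ≤ ∑' m, t (n + 1 + m) := by
        rw [Finset.sum_Ico_eq_sum_range]
        exact (hst' n).sum_le_tsum _ (fun i _ => (ht _).le)
      refine (mul_le_mul_of_nonneg_right h1
        (Finset.sum_nonneg fun _ _ => ENNReal.toReal_nonneg)).trans ?_
      have := ENNReal.toReal_mono hM (h n)
      rwa [ENNReal.toReal_mul, ENNReal.toReal_ofReal (hTp n).le,
        ENNReal.toReal_sum (fun i _ => hu i)] at this
  have e : ∑ n ∈ Finset.range N,
        ENNReal.ofReal ((∑' m, b (n + 1 + m) * t (n + 1 + m)) ^ 2) * u n =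
      ENNReal.ofReal (∑ n ∈ Finset.range N,
        (u n).toReal * (∑' m, b (n + 1 + m) * t (n + 1 + m)) ^ 2) := by
    rw [ENNReal.ofReal_sum_of_nonneg
      (fun i _ => mul_nonneg ENNReal.toReal_nonneg (sq_nonneg _))]
    refine Finset.sum_congr rfl fun n _ => ?_
    rw [mul_comm, ENNReal.ofReal_mul ENNReal.toReal_nonneg, ENNReal.ofReal_toReal (hu n)]
  rw [e]
  apply ENNReal.ofReal_le_ofReal
  refine le_of_tendsto (x := atTop) (f := fun K => ∑ n ∈ Finset.range N, (u n).toReal *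
      (∑ m ∈ Finset.range (K - (n+1)), b (n + 1 + m) * t (n + 1 + m)) ^ 2) ?_
    (eventually_atTop.2 ⟨N, H⟩)
  refine tendsto_finsetSum _ fun n _ => Tendsto.const_mul _ (Tendsto.pow ?_ 2)
  exact (hbt' n).hasSum.tendsto_sum_nat.comp (tendsto_sub_atTop_nat (n+1))

lemma ptwise {γ : ℕ → ℂ} {v : ℕ → ℝ} (hγ_ne : ∀ n, γ n ≠ 0)
    (hm : Monotone fun n => ‖γ n‖) {c : ℝ} (hc : 1 < c)
    (hs : ∀ n, c * ‖γ n‖ ≤ ‖γ (n + 1)‖) (hv : ∀ n, 0 < v n) (a : ℕ → ℂ)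
    (hp : Summable fun m => ‖a m‖ * v m / ‖γ m‖) {n : ℕ} {z : ℂ} (hz : z ∈ Omega γ n) :
    ‖Hfun γ v a z‖ ≤ ‖a n‖ * v n / ‖z - γ n‖ +
      2 * (c + 1) / (c - 1) * ((∑ m ∈ Finset.range n, ‖a m‖ * v m) / ‖z‖) +
      2 * (c + 1) / (c - 1) * (∑' m, ‖a (n + 1 + m)‖ * v (n + 1 + m) / ‖γ (n + 1 + m)‖) := by
  set D := 2 * (c + 1) / (c - 1) with hD
  have hc1 : 0 < c - 1 := by linarith
  have hδ : (c - 1) / (2 * (c + 1)) = 1 / D := by rw [hD]; field_simp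
  have hDp : 0 < D := div_pos (by linarith) hc1
  have hp' : Summable fun m => ‖a (n + 1 + m)‖ * v (n + 1 + m) / ‖γ (n + 1 + m)‖ :=
    hp.comp_injective (add_right_injective (n+1))
  set g : ℕ → ℝ := fun m => if m < n then D * (‖a m‖ * v m / ‖z‖) else
    if m = n then ‖a n‖ * v n / ‖z - γ n‖ else D * (‖a m‖ * v m / ‖γ m‖) with hg
  have hg1 : ∀ m, m < n → g m = D * (‖a m‖ * v m / ‖z‖) := fun m h => if_pos h
  have hg2 : g n = ‖a n‖ * v n / ‖z - γ n‖ := by simp [hg]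
  have hg3 : ∀ m, n < m → g m = D * (‖a m‖ * v m / ‖γ m‖) := fun m h => by
    have h1 : ¬ m < n := by omega
    have h2 : ¬ m = n := by omega
    simp only [hg, h1, h2, if_false]
  have hsum0 : HasSum (fun m => g (m + (n + 1)))
      (D * ∑' m, ‖a (n + 1 + m)‖ * v (n + 1 + m) / ‖γ (n + 1 + m)‖) := by
    have e : (fun m => g (m + (n + 1))) =
        fun m => D * (‖a (n + 1 + m)‖ * v (n + 1 + m) / ‖γ (n + 1 + m)‖) := by
      funext m
      rw [hg3 _ (by omega), add_comm m (n+1)]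
    rw [e]
    exact hp'.hasSum.mul_left D
  have hsum := (hasSum_nat_add_iff (f := g) (n+1)).1 hsum0
  refine (tsum_of_norm_bounded hsum fun m => ?_).trans (le_of_eq ?_)
  · rw [norm_div, norm_mul, Complex.norm_real, Real.norm_of_nonneg (hv m).le]
    have hn0 : 0 ≤ ‖a m‖ * v m := mul_nonneg (norm_nonneg _) (hv m).le
    rcases lt_trichotomy m n with h | h | h
    · rw [hg1 m h]
      have h1 := far_low hm hc hs h hz
      have h0 : 0 < ‖z‖ := lt_of_lt_of_le (by
        have := norm_pos_iff.2 (hγ_ne m); positivity) (om_lower hm h hz)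
      rw [hδ] at h1
      calc _ ≤ ‖a m‖ * v m / (1 / D * ‖z‖) := by gcongr
        _ = _ := by field_simp
    · subst h; rw [hg2]
    · rw [hg3 m h]
      have h1 := far_high hm hc hs h hz
      have h0 : 0 < ‖γ m‖ := norm_pos_iff.2 (hγ_ne m)
      rw [hδ] at h1
      calc _ ≤ ‖a m‖ * v m / (1 / D * ‖γ m‖) := by gcongr
        _ = _ := by field_simp
  · rw [Finset.sum_range_succ, hg2,
      Finset.sum_congr rfl (fun m h => hg1 m (Finset.mem_range.1 h)), ← Finset.mul_sum,
      ← Finset.sum_div]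
    ring

lemma suff {γ : ℕ → ℂ} {v : ℕ → ℝ} (hγ_ne : ∀ n, γ n ≠ 0)
    (hm : Monotone fun n => ‖γ n‖) (hs : Sparse γ) (hv : ∀ n, 0 < v n)
    (hadm : Admissible γ v) {μ : Measure ℂ}
    (hL : (⨆ n, localTerm γ v μ n) < ⊤) (hG : (⨆ n, globalTerm γ v μ n) < ⊤) :
    ∃ C : ℝ, 0 < C ∧ Bdd1 γ v μ C := by
  have hcov := om_cover (hγ_ne 0) hs
  obtain ⟨c, hc, hcs⟩ := hs
  have hst := summ_t hγ_ne hm hv hadm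
  have hγp : ∀ n, 0 < ‖γ n‖ := fun n => norm_pos_iff.2 (hγ_ne n)
  set L := ⨆ n, localTerm γ v μ n with hLdef
  set M := ⨆ n, globalTerm γ v μ n with hMdef
  set D := 2 * (c + 1) / (c - 1) with hD
  have hL0 := ENNReal.toReal_nonneg (a := L)
  have hM0 := ENNReal.toReal_nonneg (a := M)
  refine ⟨3 * L.toReal + 3 * D ^ 2 * (5 * M.toReal) + 3 * D ^ 2 * (5 * M.toReal) + 1,
    by positivity, ?_⟩
  intro a ha
  set b : ℕ → ℝ := fun n => ‖a n‖ with hb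
  have hS : Summable fun n => b n ^ 2 * v n := ha
  have hbb : ∀ n, (b n * ‖γ n‖) ^ 2 * (v n / ‖γ n‖ ^ 2) = b n ^ 2 * v n := fun n => by
    have := hγp n
    field_simp
  have hbt : ∀ n, (b n * ‖γ n‖) * (v n / ‖γ n‖ ^ 2) = b n * v n / ‖γ n‖ := fun n => by
    have := hγp n
    field_simp
  have hp : Summable fun m => b m * v m / ‖γ m‖ := by
    refine Summable.of_nonneg_of_le (fun n => ?_) (fun n => ?_) (hS.add hst)
    · have := hγp n; have := hv n; positivity
    · rw [← hbb n, ← hbt n]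
      have h1 : 0 ≤ v n / ‖γ n‖ ^ 2 := div_nonneg (hv n).le (sq_nonneg _)
      have h2 : b n * ‖γ n‖ ≤ (b n * ‖γ n‖) ^ 2 + 1 := by
        nlinarith [sq_nonneg (b n * ‖γ n‖ - 1), sq_nonneg (b n * ‖γ n‖)]
      have := mul_le_mul_of_nonneg_right h2 h1
      linarith
  set S := normSqV v a with hSdef
  have hS0 : 0 ≤ S := tsum_nonneg fun n => mul_nonneg (sq_nonneg _) (hv n).le
  set F : ℕ → ℝ := fun n => ∑ m ∈ Finset.range n, b m * v m with hF
  set G : ℕ → ℝ := fun n => ∑' m, b (n + 1 + m) * v (n + 1 + m) / ‖γ (n + 1 + m)‖ with hGd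
  set w : ℕ → ℝ≥0∞ := fun n => ∫⁻ z in Omega γ n, ENNReal.ofReal (1 / ‖z‖ ^ 2) ∂μ with hw
  have hMn : ∀ n, globalTerm γ v μ n ≤ M := fun n => le_iSup _ n
  have H1 : ∑' n, ENNReal.ofReal (F n ^ 2) * w n ≤ ENNReal.ofReal (5 * M.toReal * S) :=
    hardy1_enn v b hv (fun _ => norm_nonneg _) w M hG.ne
      (fun n => le_trans le_self_add (hMn n)) hS
  have H2 : ∑' n, ENNReal.ofReal (G n ^ 2) * μ (Omega γ n) ≤
      ENNReal.ofReal (5 * M.toReal * S) := by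
    have := hardy2_enn (fun n => v n / ‖γ n‖ ^ 2) (fun n => b n * ‖γ n‖)
      (fun n => div_pos (hv n) (pow_pos (hγp n) 2))
      (fun n => mul_nonneg (norm_nonneg _) (norm_nonneg _)) (fun n => μ (Omega γ n)) M hG.ne hst
      (fun n => le_trans le_add_self (hMn n)) (by simpa only [hbb] using hS)
      (by simpa only [hbt] using hp)
    simp only [hbb, hbt] at this
    exact this
  have H3 : ∑' n, ENNReal.ofReal (b n ^ 2 * v n) * localTerm γ v μ n ≤
      ENNReal.ofReal (L.toReal * S) := by
    calc _ ≤ ∑' n, ENNReal.ofReal (b n ^ 2 * v n) * L := by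
          gcongr with n
          exact le_iSup (fun n => localTerm γ v μ n) n
      _ = ENNReal.ofReal S * L := by
          rw [ENNReal.tsum_mul_right, hSdef, normSqV, ENNReal.ofReal_tsum_of_nonneg
            (fun n => mul_nonneg (sq_nonneg _) (hv n).le) hS]
      _ = _ := by
          rw [mul_comm L.toReal, ENNReal.ofReal_mul hS0, ENNReal.ofReal_toReal hL.ne]
  have hpt : ∀ n, ∫⁻ z in Omega γ n, (‖Hfun γ v a z‖₊ : ℝ≥0∞) ^ 2 ∂μ ≤
      ENNReal.ofReal 3 * (ENNReal.ofReal (b n ^ 2 * v n) * localTerm γ v μ n) +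
      ENNReal.ofReal (3 * D ^ 2) * (ENNReal.ofReal (F n ^ 2) * w n) +
      ENNReal.ofReal (3 * D ^ 2) * (ENNReal.ofReal (G n ^ 2) * μ (Omega γ n)) := by
    intro n
    have hbn : 0 ≤ b n ^ 2 * v n := mul_nonneg (sq_nonneg _) (hv n).le
    calc _ ≤ ∫⁻ z in Omega γ n, (ENNReal.ofReal (3 * (b n ^ 2 * v n)) *
              ENNReal.ofReal (v n / ‖z - γ n‖ ^ 2) +
            ENNReal.ofReal (3 * D ^ 2 * F n ^ 2) * ENNReal.ofReal (1 / ‖z‖ ^ 2) +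
            ENNReal.ofReal (3 * D ^ 2 * G n ^ 2)) ∂μ := by
          refine setLIntegral_mono' (om_meas γ n) fun z hz => ?_
          have h1 := ptwise hγ_ne hm hc hcs hv a hp hz
          have hvn := hv n
          rw [← ENNReal.ofReal_mul (by positivity), ← ENNReal.ofReal_mul (by positivity),
            ← ENNReal.ofReal_add (by positivity) (by positivity),
            ← ENNReal.ofReal_add (by positivity) (by positivity),
            ← enorm_eq_nnnorm, ← ofReal_norm, ← ENNReal.ofReal_pow (norm_nonneg _)]
          apply ENNReal.ofReal_le_ofReal
          refine (pow_le_pow_left₀ (norm_nonneg _) h1 2).trans ?_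
          change (b n * v n / ‖z - γ n‖ + D * (F n / ‖z‖) + D * G n) ^ 2 ≤ _
          have e : 3 * (b n ^ 2 * v n) * (v n / ‖z - γ n‖ ^ 2) +
              3 * D ^ 2 * F n ^ 2 * (1 / ‖z‖ ^ 2) + 3 * D ^ 2 * G n ^ 2 =
              3 * ((b n * v n / ‖z - γ n‖) ^ 2 + (D * (F n / ‖z‖)) ^ 2 + (D * G n) ^ 2) := by
            ring
          rw [e]
          generalize b n * v n / ‖z - γ n‖ = x
          generalize D * (F n / ‖z‖) = y
          generalize D * G n = t
          nlinarith [sq_nonneg (x - y), sq_nonneg (y - t), sq_nonneg (x - t)]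
      _ = _ := by
          have m1 : Measurable fun z : ℂ => ENNReal.ofReal (v n / ‖z - γ n‖ ^ 2) := by fun_prop
          have m2 : Measurable fun z : ℂ => ENNReal.ofReal (1 / ‖z‖ ^ 2) := by fun_prop
          rw [lintegral_add_left (by fun_prop), lintegral_add_left (by fun_prop),
            lintegral_const_mul _ m1, lintegral_const_mul _ m2, setLIntegral_const,
            ENNReal.ofReal_mul (p := 3) (by norm_num), ENNReal.ofReal_mul (p := 3 * D ^ 2)
              (by positivity), ENNReal.ofReal_mul (p := 3 * D ^ 2) (by positivity)]
          simp only [localTerm, hw, mul_assoc]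
  calc ∫⁻ z, (‖Hfun γ v a z‖₊ : ℝ≥0∞) ^ 2 ∂μ
      = ∫⁻ z in ⋃ n, Omega γ n, (‖Hfun γ v a z‖₊ : ℝ≥0∞) ^ 2 ∂μ := by
        rw [hcov, Measure.restrict_univ]
    _ ≤ ∑' n, ∫⁻ z in Omega γ n, (‖Hfun γ v a z‖₊ : ℝ≥0∞) ^ 2 ∂μ := lintegral_iUnion_le _ _
    _ ≤ _ := ENNReal.tsum_le_tsum hpt
    _ = ENNReal.ofReal 3 * (∑' n, ENNReal.ofReal (b n ^ 2 * v n) * localTerm γ v μ n) +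
      ENNReal.ofReal (3 * D ^ 2) * (∑' n, ENNReal.ofReal (F n ^ 2) * w n) +
      ENNReal.ofReal (3 * D ^ 2) * (∑' n, ENNReal.ofReal (G n ^ 2) * μ (Omega γ n)) := by
        rw [ENNReal.tsum_add, ENNReal.tsum_add, ENNReal.tsum_mul_left, ENNReal.tsum_mul_left,
          ENNReal.tsum_mul_left]
    _ ≤ ENNReal.ofReal 3 * ENNReal.ofReal (L.toReal * S) +
      ENNReal.ofReal (3 * D ^ 2) * ENNReal.ofReal (5 * M.toReal * S) +
      ENNReal.ofReal (3 * D ^ 2) * ENNReal.ofReal (5 * M.toReal * S) := by gcongr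
    _ ≤ _ := by
        rw [← ENNReal.ofReal_mul (by positivity), ← ENNReal.ofReal_mul (by positivity),
            ← ENNReal.ofReal_add (by positivity) (by positivity),
            ← ENNReal.ofReal_add (by positivity) (by positivity)]
        apply ENNReal.ofReal_le_ofReal
        nlinarith

/-- **Theorem (Belov–Mengestie–Seip).** For a sparse sequence `Γ`, an admissible weight `v`
and a nonnegative measure `μ` with `μ(Γ) = 0`, the following are equivalent:
(1) the weighted discrete Hilbert transform `(a_n) ↦ ∑_n a_n v_n/(z-γ_n)` is bounded from
`ℓ²_v` to `L²(ℂ,μ)`; (2) `μ` is a Carleson measure for `𝓗(Γ,v)`; (3) both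
`sup_n ∫_{Ω_n} v_n/|z-γ_n|² dμ < ∞` and
`sup_n ((∑_{m=1}^n v_m)(∑_{m=n+1}^∞ ∫_{Ω_m}|z|⁻²dμ) + (∑_{m=n+1}^∞ v_m/|γ_m|²)(∑_{m=1}^n μ(Ω_m))) < ∞`. -/
theorem carleson_tfae (γ : ℕ → ℂ) (v : ℕ → ℝ)
    (hγ_inj : Function.Injective γ) (hγ_ne : ∀ n, γ n ≠ 0)
    (hγ_mono : Monotone fun n => ‖γ n‖) (hγ_sparse : Sparse γ)
    (hv : ∀ n, 0 < v n) (hadm : Admissible γ v)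
    (μ : Measure ℂ) (hμΓ : μ (Set.range γ) = 0) :
    List.TFAE
      [(∃ C : ℝ, 0 < C ∧ ∀ a : ℕ → ℂ, Summable (fun n => ‖a n‖ ^ 2 * v n) →
          ∫⁻ z, (‖∑' n, a n * (v n : ℂ) / (z - γ n)‖₊ : ℝ≥0∞) ^ 2 ∂μ ≤
            ENNReal.ofReal (C * ∑' n, ‖a n‖ ^ 2 * v n)),
        IsCarleson γ v μ,
        (⨆ n, localTerm γ v μ n) < ⊤ ∧ (⨆ n, globalTerm γ v μ n) < ⊤] := by
  tfae_have 1 ↔ 2 := Iff.rfl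
  tfae_have 2 → 3 := by
    rintro ⟨C, _, H⟩
    refine ⟨lt_of_le_of_lt (iSup_le fun n => local_le hv H n) ENNReal.ofReal_lt_top,
      lt_of_le_of_lt (b := ENNReal.ofReal (4 * C) + ENNReal.ofReal (4 * C))
        (iSup_le fun n => ?_)
        (ENNReal.add_lt_top.2 ⟨ENNReal.ofReal_lt_top, ENNReal.ofReal_lt_top⟩)⟩
    exact add_le_add (global1_le hγ_ne hγ_mono hγ_sparse hv H n)
      (global2_le hγ_ne hγ_mono hγ_sparse hv hadm H n)
  tfae_have 3 → 2 := fun h => suff hγ_ne hγ_mono hγ_sparse hv hadm h.1 h.2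
  tfae_finish
end
end

section
/- Set P_n = ∑_{m=n+1}^∞ v_m/|γ_m|² and, for n with P_n > 0, define g_n(z) = P_n^{-1/2} ∑_{m=n+1}^∞ v_m/(conj(γ_m)(z−γ_m)). Then g_n has unit norm in 𝓗(Γ,v) (its coefficient sequence has ‖·‖_v-norm 1), and there exist constants c, C > 0 depending only on the sparseness constant inf_n |γ_{n+1}|/|γ_n| such that for every N ≥ 1, every z ∈ Ω_N, and every n > N one has c·P_n^{1/2} ≤ |g_n(z)| ≤ C·P_n^{1/2}. In particular, g_n(z) → 0 as n → ∞ for every z ∈ ⋃_N Ω_N. -/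
open MeasureTheory Filter Topology
open scoped ENNReal NNReal

noncomputable section

/-- The tail `P_n = ∑_{m=n+1}^∞ v_m/|γ_m|²`. -/
def Ptail (γ : ℕ → ℂ) (v : ℕ → ℝ) (n : ℕ) : ℝ :=
  ∑' m, v (n + 1 + m) / ‖γ (n + 1 + m)‖ ^ 2

/-- The coefficient sequence of the test function
`g_n(z) = P_n^{-1/2} ∑_{m=n+1}^∞ v_m/(conj(γ_m)(z-γ_m))`, namely
`a_m = P_n^{-1/2}/conj(γ_m)` for `m > n` and `a_m = 0` otherwise;
thus `g_n = Hfun γ v (gCoeff γ v n)`. -/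
def gCoeff (γ : ℕ → ℂ) (v : ℕ → ℝ) (n : ℕ) : ℕ → ℂ := fun m =>
  if n < m then ((Real.sqrt (Ptail γ v n) : ℂ))⁻¹ / (starRingEnd ℂ) (γ m) else 0

lemma summable_aux (γ : ℕ → ℂ) (v : ℕ → ℝ) (h0 : ∀ n, γ n ≠ 0)
    (hm : Monotone fun n => ‖γ n‖) (hv : ∀ n, 0 < v n) (ha : Admissible γ v) :
    Summable fun n => v n / ‖γ n‖ ^ 2 := by
  have ha' := ha.mul_left (1 + 1 / ‖γ 0‖ ^ 2)
  refine Summable.of_nonneg_of_le (fun n => by have := hv n; positivity) (fun n => ?_) ha'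
  have hp0 : 0 < ‖γ 0‖ := norm_pos_iff.mpr (h0 0)
  have hpn : 0 < ‖γ n‖ := norm_pos_iff.mpr (h0 n)
  have hle : ‖γ 0‖ ≤ ‖γ n‖ := hm (Nat.zero_le n)
  have hsq : ‖γ 0‖ ^ 2 ≤ ‖γ n‖ ^ 2 := by gcongr
  have hvn := hv n
  have h1 : 1 ≤ (1 / ‖γ 0‖ ^ 2) * ‖γ n‖ ^ 2 := by
    rw [one_div, inv_mul_eq_div, le_div_iff₀ (by positivity)]; linarith
  rw [mul_div_assoc', div_le_div_iff₀ (by positivity) (by positivity)]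
  nlinarith [mul_le_mul_of_nonneg_left h1 hvn.le]

/-- the truncated weights -/
def pW (γ : ℕ → ℂ) (v : ℕ → ℝ) (n m : ℕ) : ℝ := if n < m then v m / ‖γ m‖ ^ 2 else 0

lemma pW_hasSum (γ : ℕ → ℂ) (v : ℕ → ℝ) (n : ℕ)
    (hs : Summable fun n => v n / ‖γ n‖ ^ 2) :
    HasSum (pW γ v n) (Ptail γ v n) := by
  have h1 : Summable fun m => v (n + 1 + m) / ‖γ (n + 1 + m)‖ ^ 2 := by
    have := (summable_nat_add_iff (n + 1)).mpr hs
    simpa [add_comm] using this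
  have h2 : (fun m => pW γ v n (m + (n + 1))) =
      fun m => v (n + 1 + m) / ‖γ (n + 1 + m)‖ ^ 2 := by
    funext m
    rw [pW, if_pos (by omega), add_comm m]
  have h3 : ∑ i ∈ Finset.range (n + 1), pW γ v n i = 0 :=
    Finset.sum_eq_zero fun i hi => by
      rw [pW, if_neg]; have := Finset.mem_range.mp hi; omega
  have h4 := (hasSum_nat_add_iff (f := pW γ v n) (g := Ptail γ v n) (n + 1)).mp
    (by rw [h2]; exact h1.hasSum)
  simpa [h3] using h4

lemma Omega_bound (γ : ℕ → ℂ) (N : ℕ) (z : ℂ) (hz : z ∈ Omega γ N) :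
    ‖z‖ < (‖γ N‖ + ‖γ (N + 1)‖) / 2 := by
  cases N with
  | zero => exact hz
  | succ k => exact hz.2

lemma re_aux (w : ℂ) (hw : ‖w‖ < 1) : 1 / 2 ≤ ((1 - w)⁻¹).re := by
  have hne : 1 - w ≠ 0 := by
    intro h
    have : w = 1 := (sub_eq_zero.mp h).symm
    simp [this] at hw
  have hpos : 0 < Complex.normSq (1 - w) := Complex.normSq_pos.mpr hne
  rw [Complex.inv_re, div_le_div_iff₀ (by norm_num) hpos]
  have hw2 : w.re * w.re + w.im * w.im < 1 := by
    rw [← Complex.normSq_apply, Complex.normSq_eq_norm_sq]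
    nlinarith [norm_nonneg w]
  rw [Complex.normSq_apply]
  simp
  nlinarith

lemma est_aux (r : ℝ) (hr1 : r < 1) (γ : ℕ → ℂ) (v : ℕ → ℝ) (h0 : ∀ n, γ n ≠ 0)
    (hv : ∀ n, 0 < v n) (hs : Summable fun n => v n / ‖γ n‖ ^ 2) (n : ℕ) (z : ℂ)
    (hz : ∀ m, n < m → ‖z‖ ≤ r * ‖γ m‖) (hP : 0 < Ptail γ v n) :
    1 / 2 * Real.sqrt (Ptail γ v n) ≤ ‖Hfun γ v (gCoeff γ v n) z‖ ∧
      ‖Hfun γ v (gCoeff γ v n) z‖ ≤ (1 - r)⁻¹ * Real.sqrt (Ptail γ v n) := by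
  set s := Real.sqrt (Ptail γ v n) with hsdef
  have hspos : 0 < s := Real.sqrt_pos.mpr hP
  have hss : s⁻¹ * Ptail γ v n = s := by
    rw [inv_mul_eq_div, div_eq_iff hspos.ne']; exact (Real.mul_self_sqrt hP.le).symm
  have hsum := (pW_hasSum γ v n hs).mul_left s⁻¹
  rw [hss] at hsum
  set q : ℕ → ℂ := fun m => gCoeff γ v n m * (v m : ℂ) / (z - γ m) with hq
  have hw : ∀ m, n < m → ‖z / γ m‖ ≤ r := fun m hm => by
    rw [norm_div, div_le_iff₀ (norm_pos_iff.mpr (h0 m))]; exact hz m hm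
  have hqe : ∀ m, n < m → q m = -(((s⁻¹ * pW γ v n m : ℝ) : ℂ) * (1 - z / γ m)⁻¹) := by
    intro m hm
    have hne : z - γ m ≠ 0 := by
      intro h
      have h1 := hw m hm
      rw [sub_eq_zero.mp h, div_self (h0 m), norm_one] at h1
      linarith
    have hc : (starRingEnd ℂ) (γ m) ≠ 0 := by simpa using h0 m
    have hsc : (s : ℂ) ≠ 0 := by exact_mod_cast hspos.ne'
    have hn : ((‖γ m‖ : ℂ)) ^ 2 = γ m * (starRingEnd ℂ) (γ m) := (Complex.mul_conj' _).symm
    have h1 : 1 - z / γ m = -((z - γ m) / γ m) := by field_simp [h0 m]; ring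
    simp only [hq, gCoeff, pW, if_pos hm, ← hsdef]
    push_cast
    rw [hn, h1]
    have := h0 m
    field_simp
  have hq0 : ∀ m, ¬ n < m → q m = 0 ∧ pW γ v n m = 0 := by
    intro m hm
    simp [hq, gCoeff, pW, hm]
  have hp : ∀ m, 0 ≤ s⁻¹ * pW γ v n m := by
    intro m
    unfold pW
    have := hv m
    split_ifs <;> positivity
  have hub : ∀ m, ‖q m‖ ≤ (1 - r)⁻¹ * (s⁻¹ * pW γ v n m) := by
    intro m
    by_cases hm : n < m
    · rw [hqe m hm, norm_neg, norm_mul, Complex.norm_real, Real.norm_of_nonneg (hp m), mul_comm]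
      refine mul_le_mul_of_nonneg_right ?_ (hp m)
      rw [norm_inv]
      refine inv_anti₀ (by linarith) ?_
      have := norm_sub_norm_le (1 : ℂ) (z / γ m)
      rw [norm_one] at this
      linarith [hw m hm]
    · simp [hq0 m hm]
  have hlb : ∀ m, 1 / 2 * (s⁻¹ * pW γ v n m) ≤ (-q m).re := by
    intro m
    by_cases hm : n < m
    · rw [hqe m hm, neg_neg, Complex.re_ofReal_mul, mul_comm]
      exact mul_le_mul_of_nonneg_left (re_aux _ ((hw m hm).trans_lt hr1)) (hp m)
    · simp [hq0 m hm]
  have hbs := hsum.mul_left (1 - r)⁻¹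
  have hqs : Summable q := Summable.of_norm_bounded hbs.summable hub
  have hH : Hfun γ v (gCoeff γ v n) z = ∑' m, q m := rfl
  rw [hH]
  constructor
  · have h1 := hasSum_le hlb (hsum.mul_left (1 / 2)) (Complex.hasSum_re hqs.hasSum.neg)
    refine h1.trans ((Complex.re_le_norm _).trans ?_)
    rw [norm_neg]
  · exact tsum_of_norm_bounded hbs hub

/-- The test functions `g_n` have unit norm in `𝓗(Γ,v)`, and there are constants
`c, C > 0` depending only on the sparseness constant `δ` such that
`c P_n^{1/2} ≤ |g_n(z)| ≤ C P_n^{1/2}` for all `z ∈ Ω_N` and `n > N`; in particular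
`g_n(z) → 0` for every `z` in the union of the shells. -/
theorem gCoeff_unitNorm_and_estimate (δ : ℝ) (hδ : 1 < δ) :
    ∃ c C : ℝ, 0 < c ∧ 0 < C ∧
      ∀ (γ : ℕ → ℂ) (v : ℕ → ℝ),
        Function.Injective γ → (∀ n, γ n ≠ 0) → (Monotone fun n => ‖γ n‖) →
        (∀ n, δ * ‖γ n‖ ≤ ‖γ (n + 1)‖) → (∀ n, 0 < v n) → Admissible γ v →
        (∀ n, 0 < Ptail γ v n →
          normSqV v (gCoeff γ v n) = 1) ∧
        (∀ N, ∀ z ∈ Omega γ N, ∀ n, N < n → 0 < Ptail γ v n →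
          c * Real.sqrt (Ptail γ v n) ≤ ‖Hfun γ v (gCoeff γ v n) z‖ ∧
            ‖Hfun γ v (gCoeff γ v n) z‖ ≤ C * Real.sqrt (Ptail γ v n)) ∧
        (∀ z ∈ ⋃ N, Omega γ N,
          Tendsto (fun n => Hfun γ v (gCoeff γ v n) z) atTop (𝓝 0)) := by
  set r : ℝ := (1 / δ + 1) / 2 with hr
  have hδ1 : 1 / δ < 1 := by rw [div_lt_one (by linarith)]; exact hδ
  have hr1 : r < 1 := by rw [hr]; linarith
  refine ⟨1 / 2, (1 - r)⁻¹, by norm_num, inv_pos.mpr (by linarith), ?_⟩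
  intro γ v _ h0 hm hsp hv ha
  have hs := summable_aux γ v h0 hm hv ha
  have hPpos : ∀ n, 0 < Ptail γ v n := by
    intro n
    have h1 : Summable fun m => v (n + 1 + m) / ‖γ (n + 1 + m)‖ ^ 2 := by
      have := (summable_nat_add_iff (n + 1)).mpr hs
      simpa [add_comm] using this
    refine h1.tsum_pos (fun m => ?_) 0 ?_
    · have := hv (n + 1 + m); positivity
    · have := hv (n + 1 + 0)
      have := norm_pos_iff.mpr (h0 (n + 1 + 0))
      positivity
  have key : ∀ N, ∀ z ∈ Omega γ N, ∀ n, N < n → 0 < Ptail γ v n →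
      1 / 2 * Real.sqrt (Ptail γ v n) ≤ ‖Hfun γ v (gCoeff γ v n) z‖ ∧
        ‖Hfun γ v (gCoeff γ v n) z‖ ≤ (1 - r)⁻¹ * Real.sqrt (Ptail γ v n) := by
    intro N z hz n hn hP
    refine est_aux r hr1 γ v h0 hv hs n z (fun m hnm => ?_) hP
    have h1 := Omega_bound γ N z hz
    have h2 : ‖γ N‖ ≤ 1 / δ * ‖γ (N + 1)‖ := by
      rw [one_div, inv_mul_eq_div, le_div_iff₀ (by linarith)]
      linarith [hsp N]
    have h3 : ‖γ (N + 1)‖ ≤ ‖γ m‖ := hm (by omega : N + 1 ≤ m)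
    have h4 : 0 ≤ r := by rw [hr]; positivity
    have h5 := mul_le_mul_of_nonneg_left h3 h4
    have h6 : r * ‖γ (N + 1)‖ = (1 / δ * ‖γ (N + 1)‖ + ‖γ (N + 1)‖) / 2 := by rw [hr]; ring
    linarith
  refine ⟨?_, key, ?_⟩
  · intro n hP
    have h1 := (pW_hasSum γ v n hs).mul_left (Ptail γ v n)⁻¹
    rw [inv_mul_cancel₀ hP.ne'] at h1
    rw [normSqV, ← h1.tsum_eq]
    congr 1
    funext m
    unfold gCoeff pW
    split_ifs
    · rw [norm_div, norm_inv, Complex.norm_real, Real.norm_of_nonneg (Real.sqrt_nonneg _),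
        RCLike.norm_conj, div_pow, inv_pow, Real.sq_sqrt hP.le]
      ring
    · simp
  · intro z hz
    obtain ⟨N, hN⟩ := Set.mem_iUnion.mp hz
    have ht : Tendsto (fun n => Ptail γ v n) atTop (𝓝 0) := by
      have := (tendsto_sum_nat_add fun n => v n / ‖γ n‖ ^ 2).comp (tendsto_add_atTop_nat 1)
      refine this.congr fun n => ?_
      simp only [Function.comp, Ptail]
      congr 1
      funext m
      rw [add_comm m]
    have ht2 : Tendsto (fun n => (1 - r)⁻¹ * Real.sqrt (Ptail γ v n)) atTop (𝓝 0) := by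
      have := ((Real.continuous_sqrt.tendsto 0).comp ht).const_mul (1 - r)⁻¹
      simpa using this
    refine squeeze_zero_norm' ?_ ht2
    filter_upwards [eventually_gt_atTop N] with n hn
    exact (key N z hN n hn (hPpos n)).2
end
end

section
/- Let (v_m)_{m≥1} be positive reals with V_n = ∑_{m=1}^{n-1} v_m → ∞, and let (τ_l)_{l≥1} be nonnegative reals such that lim_{n→∞} V_{n+1} · ∑_{l=n+1}^∞ τ_l² = 0. Then there is an absolute constant C such that for every ε > 0 there exists N with ∑_{l=m+1}^∞ τ_l² V_l^{1/2} ≤ C ε V_{m+1}^{-1/2} for all m ≥ N. -/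
open MeasureTheory Filter Topology
open scoped ENNReal NNReal

noncomputable section

/-- Dyadic block estimate: if `V_n = ∑_{m=1}^{n-1} v_m → ∞` (here `v m` is the paper's
`v_{m+1}`, so the paper's `V_{n+1}` is `∑ m ∈ Finset.range n, v m`, and `τ l` is the
paper's `τ_{l+1}`) and `V_{n+1} ∑_{l=n+1}^∞ τ_l² → 0`, then there is an absolute constant
`C` such that for every `ε > 0` there is `N` with
`∑_{l=m+1}^∞ τ_l² V_l^{1/2} ≤ C ε V_{m+1}^{-1/2}` for all `m ≥ N`. -/
theorem tail_dyadic_estimate :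
    ∃ C : ℝ, 0 < C ∧
      ∀ (v τ : ℕ → ℝ), (∀ m, 0 < v m) → (∀ l, 0 ≤ τ l) →
        Tendsto (fun n => ∑ m ∈ Finset.range n, v m) atTop atTop →
        Tendsto (fun n => (∑ m ∈ Finset.range n, v m) * ∑' l, τ (n + l) ^ 2) atTop (𝓝 0) →
        ∀ ε > 0, ∃ N, ∀ m ≥ N,
          (∑' k, τ (m + k) ^ 2 * Real.sqrt (∑ i ∈ Finset.range (m + k), v i)) ≤
            C * ε / Real.sqrt (∑ i ∈ Finset.range m, v i) := by
  refine ⟨2, by norm_num, ?_⟩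
  intro v τ hv hτ _ hT ε hε
  by_cases hs : Summable (fun l => τ l ^ 2)
  · have hev : ∀ᶠ n in atTop,
        (∑ m ∈ Finset.range n, v m) * ∑' l, τ (n + l) ^ 2 < ε := hT.eventually_lt_const hε
    obtain ⟨N, hN⟩ := eventually_atTop.1 hev
    refine ⟨N + 1, fun m hm => ?_⟩
    set V : ℕ → ℝ := fun n => ∑ i ∈ Finset.range n, v i with hV
    set S : ℕ → ℝ := fun n => ∑' l, τ (n + l) ^ 2 with hS
    have hV0 : ∀ n, 0 ≤ V n := fun n => Finset.sum_nonneg fun i _ => (hv i).le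
    have hS0 : ∀ n, 0 ≤ S n := fun n => tsum_nonneg fun l => sq_nonneg _
    have hsn : ∀ n, Summable (fun l => τ (n + l) ^ 2) := fun n => by
      have := (summable_nat_add_iff (f := fun l => τ l ^ 2) n).2 hs
      simpa [add_comm] using this
    have hrec : ∀ n, S n = τ n ^ 2 + S (n + 1) := fun n => by
      have := (hsn n).tsum_eq_zero_add
      simp only [hS]
      rw [this]
      simp [add_assoc, add_comm 1]
    have hprod : ∀ n, N ≤ n → √(S n) * √(V n) ≤ √ε := fun n hn => by
      rw [← Real.sqrt_mul (hS0 n)]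
      apply Real.sqrt_le_sqrt
      rw [mul_comm]
      exact (hN n hn).le
    have hterm : ∀ n, N ≤ n → τ n ^ 2 * √(V n) ≤ 2 * √ε * (√(S n) - √(S (n + 1))) := by
      intro n hn
      have h1 := Real.sq_sqrt (hS0 n)
      have h2 := Real.sq_sqrt (hS0 (n + 1))
      have h3 : √(S (n + 1)) ≤ √(S n) :=
        Real.sqrt_le_sqrt (by rw [hrec n]; nlinarith [sq_nonneg (τ n)])
      have h4 := hprod n hn
      have h5 : τ n ^ 2 = (√(S n) - √(S (n + 1))) * (√(S n) + √(S (n + 1))) := by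
        have := hrec n
        nlinarith
      have hw := Real.sqrt_nonneg (V n)
      rw [h5]
      have h6 : (√(S n) + √(S (n + 1))) * √(V n) ≤ 2 * √ε := by nlinarith
      nlinarith [mul_le_mul_of_nonneg_left h6 (sub_nonneg.2 h3)]
    have hpart : ∀ n, ∑ k ∈ Finset.range n, τ (m + k) ^ 2 * √(V (m + k)) ≤
        2 * √ε * (√(S m) - √(S (m + n))) := by
      intro n
      induction n with
      | zero => simp
      | succ n ih =>
        rw [Finset.sum_range_succ]
        have := hterm (m + n) (by omega)
        rw [← add_assoc]
        linarith
    have hVm : 0 < √(V m) :=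
      Real.sqrt_pos.2 (Finset.sum_pos (fun i _ => hv i) ⟨0, by simp; omega⟩)
    have he := Real.sqrt_nonneg ε
    have hfin : 2 * √ε * √(S m) ≤ 2 * ε / √(V m) := by
      rw [le_div_iff₀ hVm]
      have := hprod m (by omega)
      nlinarith [Real.sq_sqrt hε.le, mul_le_mul_of_nonneg_left this he]
    refine Real.tsum_le_of_sum_range_le (fun k => by positivity) fun n => ?_
    refine (hpart n).trans (le_trans ?_ hfin)
    nlinarith [mul_nonneg he (Real.sqrt_nonneg (S (m + n)))]
  · refine ⟨1, fun m hm => ?_⟩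
    rw [tsum_eq_zero_of_not_summable]
    · positivity
    · intro h
      apply hs
      have hVm : 0 < √(∑ i ∈ Finset.range m, v i) :=
        Real.sqrt_pos.2 (Finset.sum_pos (fun i _ => hv i) ⟨0, by simp; omega⟩)
      rw [← summable_nat_add_iff m]
      refine Summable.of_nonneg_of_le (fun k => sq_nonneg _) (fun k => ?_)
        (h.mul_right (√(∑ i ∈ Finset.range m, v i))⁻¹)
      rw [← div_eq_mul_inv, le_div_iff₀ hVm, add_comm k m]
      refine mul_le_mul_of_nonneg_left (Real.sqrt_le_sqrt ?_) (sq_nonneg _)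
      exact Finset.sum_le_sum_of_subset_of_nonneg
        (Finset.range_mono (by omega)) (fun i _ _ => (hv i).le)
end
end

section
/- Let (P_l)_{l≥0} be a nonincreasing sequence of positive reals with P_l → 0, and let (p_l)_{l≥1} be nonnegative reals such that lim_{n→∞} P_n · ∑_{l=1}^{n} p_l = 0. Then there is an absolute constant C such that for every ε > 0 there exists N with ∑_{l=1}^{m-1} p_l P_l^{1/2} ≤ C ε P_{m-1}^{-1/2} for all m ≥ N. -/
open MeasureTheory Filter Topology
open scoped ENNReal NNReal

noncomputable section

/-- Dyadic block estimate: if `(P_l)_{l≥0}` is nonincreasing, positive, `P_l → 0`, the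
`p_l` are nonnegative (here `p l` is the paper's `p_{l+1}` while `P` keeps its indexing)
and `P_n ∑_{l=1}^n p_l → 0`, then there is an absolute constant `C` such that for every
`ε > 0` there is `N` with `∑_{l=1}^{m-1} p_l P_l^{1/2} ≤ C ε P_{m-1}^{-1/2}` for all
`m ≥ N`. -/
theorem head_dyadic_estimate :
    ∃ C : ℝ, 0 < C ∧
      ∀ (P p : ℕ → ℝ), (∀ l, 0 < P l) → Antitone P → Tendsto P atTop (𝓝 0) →
        (∀ l, 0 ≤ p l) →
        Tendsto (fun n => P n * ∑ l ∈ Finset.range n, p l) atTop (𝓝 0) →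
        ∀ ε > 0, ∃ N, ∀ m ≥ N,
          (∑ l ∈ Finset.range (m - 1), p l * Real.sqrt (P (l + 1))) ≤
            C * ε / Real.sqrt (P (m - 1)) := by
  refine ⟨3, by norm_num, ?_⟩
  intro P p hP hanti hlim hp hS ε hε
  have hsp : ∀ n, 0 < Real.sqrt (P n) := fun n => Real.sqrt_pos.2 (hP n)
  have hsq : ∀ n, Real.sqrt (P n) * Real.sqrt (P n) = P n := fun n =>
    Real.mul_self_sqrt (hP n).le
  obtain ⟨K, hK⟩ := eventually_atTop.1 (hS.eventually (gt_mem_nhds hε))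
  set U : ℕ → ℝ := fun n => (∑ l ∈ Finset.range n, p l * Real.sqrt (P (l + 1))) -
    (∑ l ∈ Finset.range n, p l) * Real.sqrt (P n) with hU
  have hind : ∀ n ≥ K, U n ≤ U K + ε / Real.sqrt (P n) - ε / Real.sqrt (P K) := by
    intro n hn
    induction n, hn using Nat.le_induction with
    | base => linarith
    | succ n hn ih =>
      have hstep : U (n + 1) = U n + (∑ l ∈ Finset.range n, p l) *
          (Real.sqrt (P n) - Real.sqrt (P (n + 1))) := by
        simp only [hU, Finset.sum_range_succ]
        ring
      have hk := hK n hn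
      have hle : Real.sqrt (P (n + 1)) ≤ Real.sqrt (P n) :=
        Real.sqrt_le_sqrt (hanti (Nat.le_succ n))
      rw [← hsq n] at hk
      have ha := hsp n
      have hb := hsp (n + 1)
      have hSn : 0 ≤ ∑ l ∈ Finset.range n, p l := Finset.sum_nonneg fun l _ => hp l
      generalize Real.sqrt (P n) = a at *
      generalize Real.sqrt (P (n + 1)) = b at *
      generalize (∑ l ∈ Finset.range n, p l) = S at *
      have key : S * (a - b) ≤ ε / b - ε / a := by
        rw [div_sub_div _ _ hb.ne' ha.ne', le_div_iff₀ (mul_pos hb ha)]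
        have h1 : S * (b * a) ≤ ε := by
          have : b * a ≤ a * a := mul_le_mul_of_nonneg_right hle ha.le
          nlinarith [mul_le_mul_of_nonneg_left this hSn]
        nlinarith [mul_le_mul_of_nonneg_right h1 (sub_nonneg.2 hle)]
      linarith
  have hlim2 : Tendsto (fun n => U K * Real.sqrt (P n)) atTop (𝓝 0) := by
    have h := (hlim.sqrt).const_mul (U K)
    simpa using h
  obtain ⟨M, hM⟩ := eventually_atTop.1 (hlim2.eventually (gt_mem_nhds hε))
  refine ⟨max K M + 1, fun m hm => ?_⟩
  have hn1 : K ≤ m - 1 := by omega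
  have hn2 : M ≤ m - 1 := by omega
  generalize m - 1 = n at *
  have h1 := hind n hn1
  have h2 : U K ≤ ε / Real.sqrt (P n) := (le_div_iff₀ (hsp n)).2 (hM n hn2).le
  have h3 : (∑ l ∈ Finset.range n, p l) * Real.sqrt (P n) ≤ ε / Real.sqrt (P n) := by
    rw [le_div_iff₀ (hsp n), mul_assoc, hsq, mul_comm]
    exact (hK n hn1).le
  have h4 : 0 < ε / Real.sqrt (P K) := div_pos hε (hsp K)
  have h5 : (∑ l ∈ Finset.range n, p l * Real.sqrt (P (l + 1))) =
    U n + (∑ l ∈ Finset.range n, p l) * Real.sqrt (P n) := by simp only [hU]; ring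
  rw [h5, mul_div_assoc]
  linarith
end
end

section
/- There exists a constant C, depending only on the sparseness constant inf_n |γ_{n+1}|/|γ_n|, such that for every a = (a_m) ∈ ℓ²_v and every nonnegative Borel measure μ on ℂ with μ(Γ) = 0, the function f(z) = ∑_m a_m v_m/(z−γ_m) satisfies ∑_{l=1}^∞ ∫_{Ω_l} |f(z)|² dμ(z) ≤ C [ ∑_{l=1}^∞ ∫_{Ω_l} |z|^{-2} (∑_{m=1}^{l-1} |a_m| v_m)² dμ(z) + ∑_{l=1}^∞ ∫_{Ω_l} |a_l|² v_l²/|z−γ_l|² dμ(z) + ∑_{l=1}^∞ μ(Ω_l) (∑_{m=l+1}^∞ |a_m| v_m/|γ_m|)² ]. -/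
open MeasureTheory Filter Topology
open scoped ENNReal NNReal

noncomputable section

lemma aux_meas (γ : ℕ → ℂ) (l : ℕ) : MeasurableSet (Omega γ l) := by
  cases l with
  | zero =>
    have : MeasurableSet {z : ℂ | ‖z‖ < (‖γ 0‖ + ‖γ 1‖) / 2} :=
      measurableSet_lt measurable_norm measurable_const
    exact this
  | succ n =>
    have h1 : MeasurableSet {z : ℂ | (‖γ n‖ + ‖γ (n + 1)‖) / 2 ≤ ‖z‖} :=
      measurableSet_le measurable_const measurable_norm
    have h2 : MeasurableSet {z : ℂ | ‖z‖ < (‖γ (n + 1)‖ + ‖γ (n + 2)‖) / 2} :=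
      measurableSet_lt measurable_norm measurable_const
    exact h1.inter h2

lemma aux_low (δ : ℝ) (hδ : 1 < δ) (γ : ℕ → ℂ) (hm : Monotone fun n => ‖γ n‖)
    (hs : ∀ n, δ * ‖γ n‖ ≤ ‖γ (n + 1)‖) (l m : ℕ) (h : m < l) (z : ℂ) (hz : z ∈ Omega γ l) :
    ‖z‖ ≤ (2 * δ / (δ - 1)) * ‖z - γ m‖ := by
  obtain ⟨n, rfl⟩ : ∃ n, l = n + 1 := ⟨l - 1, by omega⟩
  have h1 : (‖γ n‖ + ‖γ (n + 1)‖) / 2 ≤ ‖z‖ := hz.1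
  have h2 : ‖γ m‖ ≤ ‖γ n‖ := hm (by omega)
  have h3 := hs n
  have h4 : ‖z‖ - ‖γ m‖ ≤ ‖z - γ m‖ := norm_sub_norm_le _ _
  have hd : 0 < δ - 1 := by linarith
  have h5 := norm_nonneg (γ m)
  rw [div_mul_eq_mul_div, le_div_iff₀ hd]
  have h6 : (1 + δ) * ‖γ m‖ ≤ 2 * ‖z‖ := by nlinarith
  have h7 : (2 * δ) * (‖z‖ - ‖γ m‖) ≤ 2 * δ * ‖z - γ m‖ := by gcongr
  have h8 : (1 + δ) * ((1 + δ) * ‖γ m‖) ≤ (1 + δ) * (2 * ‖z‖) := by gcongr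
  have h9 : 0 ≤ (δ - 1) ^ 2 * ‖γ m‖ := by positivity
  nlinarith

lemma aux_high (δ : ℝ) (hδ : 1 < δ) (γ : ℕ → ℂ) (hm : Monotone fun n => ‖γ n‖)
    (hs : ∀ n, δ * ‖γ n‖ ≤ ‖γ (n + 1)‖) (l m : ℕ) (h : l < m) (z : ℂ) (hz : z ∈ Omega γ l) :
    ‖γ m‖ ≤ (2 * δ / (δ - 1)) * ‖z - γ m‖ := by
  have h1 : ‖z‖ < (‖γ l‖ + ‖γ (l + 1)‖) / 2 := by
    cases l with
    | zero => exact hz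
    | succ n => exact hz.2
  have h2 : ‖γ (l + 1)‖ ≤ ‖γ m‖ := hm (by omega)
  have h3 := hs l
  have h4 : ‖γ m‖ - ‖z‖ ≤ ‖z - γ m‖ := by
    rw [norm_sub_rev]; exact norm_sub_norm_le _ _
  have hd : 0 < δ - 1 := by linarith
  rw [div_mul_eq_mul_div, le_div_iff₀ hd]
  have h7 : (2 * δ) * (‖γ m‖ - ‖z‖) ≤ 2 * δ * ‖z - γ m‖ := by gcongr
  have h8 : 2 * δ * ‖z‖ ≤ δ * ‖γ l‖ + δ * ‖γ (l + 1)‖ := by nlinarith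
  nlinarith

lemma aux_div (K x d N : ℝ) (hx : 0 < x) (hN : 0 ≤ N) (hd : 0 ≤ d) (h : x ≤ K * d) :
    N / d ≤ K * (N / x) := by
  rcases hd.eq_or_lt with rfl | hd
  · simp at h; linarith
  · rw [← mul_div_assoc, div_le_div_iff₀ hd hx]
    nlinarith

lemma aux_summable (γ : ℕ → ℂ) (v : ℕ → ℝ) (a : ℕ → ℂ) (h0 : ∀ n, γ n ≠ 0)
    (hm : Monotone fun n => ‖γ n‖) (hv : ∀ n, 0 < v n) (hA : Admissible γ v)
    (ha : MemL2v v a) : Summable fun n => ‖a n‖ * v n / ‖γ n‖ := by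
  have hg : ∀ n, 0 < ‖γ n‖ := fun n => norm_pos_iff.2 (h0 n)
  refine Summable.of_nonneg_of_le (fun n => ?_) (fun n => ?_)
    (ha.add (hA.mul_left (1 + 1 / ‖γ 0‖ ^ 2)))
  · have := hv n
    positivity
  · have hvn := hv n
    have hgn := hg n
    have hg0 := hg 0
    have h1 : ‖γ 0‖ ≤ ‖γ n‖ := hm (Nat.zero_le n)
    have h2 : v n / ‖γ n‖ ^ 2 ≤ (1 + 1 / ‖γ 0‖ ^ 2) * (v n / (1 + ‖γ n‖ ^ 2)) := by
      have h3 : 1 / ‖γ n‖ ^ 2 ≤ 1 / ‖γ 0‖ ^ 2 := by gcongr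
      have h4 : v n / ‖γ n‖ ^ 2 = (1 + 1 / ‖γ n‖ ^ 2) * (v n / (1 + ‖γ n‖ ^ 2)) := by
        field_simp
        ring
      rw [h4]
      gcongr
    have h5 : ‖a n‖ * v n / ‖γ n‖ ≤ ‖a n‖ ^ 2 * v n + v n / ‖γ n‖ ^ 2 := by
      have e1 : ‖a n‖ * v n / ‖γ n‖ = v n * (‖a n‖ * (1 / ‖γ n‖)) := by ring
      have e2 : ‖a n‖ ^ 2 * v n + v n / ‖γ n‖ ^ 2 = v n * (‖a n‖ ^ 2 + (1 / ‖γ n‖) ^ 2) := by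
        ring
      rw [e1, e2]
      gcongr
      nlinarith [sq_nonneg (‖a n‖ - 1 / ‖γ n‖), sq_nonneg (‖a n‖), sq_nonneg (1 / ‖γ n‖)]
    linarith

lemma aux_point (δ : ℝ) (hδ : 1 < δ) (γ : ℕ → ℂ) (v : ℕ → ℝ) (a : ℕ → ℂ) (h0 : ∀ n, γ n ≠ 0)
    (hm : Monotone fun n => ‖γ n‖) (hs : ∀ n, δ * ‖γ n‖ ≤ ‖γ (n + 1)‖)
    (hv : ∀ n, 0 < v n) (hA : Admissible γ v)
    (ha : MemL2v v a) (l : ℕ) (z : ℂ) (hz : z ∈ Omega γ l) :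
    ‖Hfun γ v a z‖ ≤ (2 * δ / (δ - 1)) * ((∑ m ∈ Finset.range l, ‖a m‖ * v m) / ‖z‖)
      + ‖a l‖ * v l / ‖z - γ l‖
      + (2 * δ / (δ - 1)) * ∑' k, ‖a (l + 1 + k)‖ * v (l + 1 + k) / ‖γ (l + 1 + k)‖ := by
  set K := 2 * δ / (δ - 1) with hK
  have hg : ∀ n, 0 < ‖γ n‖ := fun n => norm_pos_iff.2 (h0 n)
  have hnorm : ∀ m, ‖a m * (v m : ℂ) / (z - γ m)‖ = ‖a m‖ * v m / ‖z - γ m‖ := by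
    intro m
    rw [norm_div, norm_mul, Complex.norm_real, Real.norm_of_nonneg (hv m).le]
  have hN : ∀ m, 0 ≤ ‖a m‖ * v m := fun m => mul_nonneg (norm_nonneg _) (hv m).le
  have hsum := aux_summable γ v a h0 hm hv hA ha
  have hsum' : Summable fun k => ‖a (l + 1 + k)‖ * v (l + 1 + k) / ‖γ (l + 1 + k)‖ := by
    have := (summable_nat_add_iff (l + 1)).2 hsum
    simpa only [add_comm _ (l + 1)] using this
  have hb : ∀ k, ‖a (l + 1 + k) * (v (l + 1 + k) : ℂ) / (z - γ (l + 1 + k))‖ ≤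
      K * (‖a (l + 1 + k)‖ * v (l + 1 + k) / ‖γ (l + 1 + k)‖) := by
    intro k
    rw [hnorm]
    exact aux_div _ _ _ _ (hg _) (hN _) (norm_nonneg _)
      (aux_high δ hδ γ hm hs l _ (by omega) z hz)
  have htail : ‖∑' k, a (l + 1 + k) * (v (l + 1 + k) : ℂ) / (z - γ (l + 1 + k))‖ ≤
      K * ∑' k, ‖a (l + 1 + k)‖ * v (l + 1 + k) / ‖γ (l + 1 + k)‖ := by
    rw [← tsum_mul_left]
    exact tsum_of_norm_bounded (hsum'.mul_left K).hasSum hb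
  have hS0 : Summable fun k => a (l + 1 + k) * (v (l + 1 + k) : ℂ) / (z - γ (l + 1 + k)) :=
    Summable.of_norm_bounded (hsum'.mul_left K) hb
  have hS : Summable fun m => a m * (v m : ℂ) / (z - γ m) := by
    rw [← summable_nat_add_iff (l + 1)]
    simpa only [add_comm _ (l + 1)] using hS0
  have hdec : Hfun γ v a z = (∑ m ∈ Finset.range l, a m * (v m : ℂ) / (z - γ m))
      + a l * (v l : ℂ) / (z - γ l)
      + ∑' k, a (l + 1 + k) * (v (l + 1 + k) : ℂ) / (z - γ (l + 1 + k)) := by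
    have := hS.sum_add_tsum_nat_add (l + 1)
    rw [Finset.sum_range_succ] at this
    simp only [add_comm _ (l + 1)] at this
    exact this.symm
  have hhead : ‖∑ m ∈ Finset.range l, a m * (v m : ℂ) / (z - γ m)‖ ≤
      K * ((∑ m ∈ Finset.range l, ‖a m‖ * v m) / ‖z‖) := by
    rw [Finset.sum_div, Finset.mul_sum]
    refine norm_sum_le_of_le _ fun m hml => ?_
    have hml := Finset.mem_range.1 hml
    rw [hnorm]
    refine aux_div _ _ _ _ ?_ (hN _) (norm_nonneg _) (aux_low δ hδ γ hm hs l m hml z hz)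
    obtain ⟨n, rfl⟩ : ∃ n, l = n + 1 := ⟨l - 1, by omega⟩
    have h1 : (‖γ n‖ + ‖γ (n + 1)‖) / 2 ≤ ‖z‖ := hz.1
    have := hg n
    have := hg (n + 1)
    linarith
  rw [hdec]
  refine (norm_add₃_le).trans ?_
  rw [hnorm]
  gcongr

/-- The basic splitting estimate: there is a constant `C` depending only on the
sparseness constant `δ` such that for every `a ∈ ℓ²_v`, every admissible weight and
every measure `μ` with `μ(Γ) = 0`, the function `f(z) = ∑_m a_m v_m/(z-γ_m)` satisfies
`∑_l ∫_{Ω_l}|f|²dμ ≤ C (∑_l ∫_{Ω_l}|z|⁻²(∑_{m<l}|a_m|v_m)² dμ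
+ ∑_l ∫_{Ω_l}|a_l|²v_l²/|z-γ_l|² dμ + ∑_l μ(Ω_l)(∑_{m>l}|a_m|v_m/|γ_m|)²)`. -/
theorem splitting_estimate (δ : ℝ) (hδ : 1 < δ) :
    ∃ C : ℝ, 0 < C ∧
      ∀ (γ : ℕ → ℂ) (v : ℕ → ℝ) (μ : Measure ℂ) (a : ℕ → ℂ),
        Function.Injective γ → (∀ n, γ n ≠ 0) → (Monotone fun n => ‖γ n‖) →
        (∀ n, δ * ‖γ n‖ ≤ ‖γ (n + 1)‖) → (∀ n, 0 < v n) → Admissible γ v →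
        μ (Set.range γ) = 0 → MemL2v v a →
        (∑' l, ∫⁻ z in Omega γ l, (‖Hfun γ v a z‖₊ : ℝ≥0∞) ^ 2 ∂μ) ≤
          ENNReal.ofReal C *
            ((∑' l, ∫⁻ z in Omega γ l,
                ENNReal.ofReal ((∑ m ∈ Finset.range l, ‖a m‖ * v m) ^ 2 / ‖z‖ ^ 2) ∂μ) +
              (∑' l, ∫⁻ z in Omega γ l,
                ENNReal.ofReal (‖a l‖ ^ 2 * v l ^ 2 / ‖z - γ l‖ ^ 2) ∂μ) +
              (∑' l, μ (Omega γ l) *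
                ENNReal.ofReal
                  ((∑' k, ‖a (l + 1 + k)‖ * v (l + 1 + k) / ‖γ (l + 1 + k)‖) ^ 2))) := by
  have hd : 0 < δ - 1 := by linarith
  set K := 2 * δ / (δ - 1) with hK
  have hK1 : 1 ≤ K := by
    rw [hK, le_div_iff₀ hd]; linarith
  refine ⟨3 * K ^ 2, by positivity, ?_⟩
  intro γ v μ a _ h0 hm hs hv hA _ ha
  rw [← ENNReal.tsum_add, ← ENNReal.tsum_add, ← ENNReal.tsum_mul_left]
  refine ENNReal.tsum_le_tsum fun l => ?_
  set S := ∑ m ∈ Finset.range l, ‖a m‖ * v m with hS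
  set T := ∑' k, ‖a (l + 1 + k)‖ * v (l + 1 + k) / ‖γ (l + 1 + k)‖ with hT
  have hpt : ∀ z ∈ Omega γ l, (‖Hfun γ v a z‖₊ : ℝ≥0∞) ^ 2 ≤ ENNReal.ofReal (3 * K ^ 2) *
      (ENNReal.ofReal (S ^ 2 / ‖z‖ ^ 2)
        + ENNReal.ofReal (‖a l‖ ^ 2 * v l ^ 2 / ‖z - γ l‖ ^ 2) + ENNReal.ofReal (T ^ 2)) := by
    intro z hz
    have h := aux_point δ hδ γ v a h0 hm hs hv hA ha l z hz
    rw [← hK, ← hS, ← hT] at h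
    rw [← ENNReal.ofReal_add (by positivity) (by positivity),
      ← ENNReal.ofReal_add (by positivity) (by positivity),
      ← ENNReal.ofReal_mul (by positivity), ← enorm_eq_nnnorm, ← ofReal_norm,
      ← ENNReal.ofReal_pow (norm_nonneg _)]
    apply ENNReal.ofReal_le_ofReal
    have hvl := hv l
    have e1 : S ^ 2 / ‖z‖ ^ 2 = (S / ‖z‖) ^ 2 := by rw [div_pow]
    have e2 : ‖a l‖ ^ 2 * v l ^ 2 / ‖z - γ l‖ ^ 2 = (‖a l‖ * v l / ‖z - γ l‖) ^ 2 := by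
      rw [div_pow, mul_pow]
    rw [e1, e2]
    have hY : 0 ≤ ‖a l‖ * v l / ‖z - γ l‖ := by positivity
    generalize S / ‖z‖ = X at *
    generalize ‖a l‖ * v l / ‖z - γ l‖ = Y at *
    have h' : ‖Hfun γ v a z‖ ≤ K * (X + Y + T) := by nlinarith
    calc ‖Hfun γ v a z‖ ^ 2 ≤ (K * (X + Y + T)) ^ 2 := by gcongr
      _ = K ^ 2 * (X + Y + T) ^ 2 := by ring
      _ ≤ K ^ 2 * (3 * (X ^ 2 + Y ^ 2 + T ^ 2)) := by
        gcongr
        nlinarith [sq_nonneg (X - Y), sq_nonneg (Y - T), sq_nonneg (X - T)]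
      _ = _ := by ring
  refine (setLIntegral_mono' (aux_meas γ l) hpt).trans ?_
  rw [lintegral_const_mul _ (by fun_prop), lintegral_add_left (by fun_prop),
    lintegral_add_left (by fun_prop), setLIntegral_const, mul_comm (ENNReal.ofReal (T ^ 2))]
end
end

section
/- Suppose μ is a nonnegative Borel measure on ℂ with μ(Γ) = 0 satisfying lim_{l→∞} ∫_{Ω_l} v_l/|z−γ_l|² dμ(z) = 0 and sup_l ∫_{Ω_l} v_l/|z−γ_l|² dμ(z) < ∞. Let (a^{(n)}) be a sequence in ℓ²_v with sup_n ‖a^{(n)}‖_v < ∞ and such that a^{(n)}_l → 0 as n → ∞ for each fixed l. Then lim_{n→∞} ∑_{l=1}^∞ |a^{(n)}_l|² v_l² ∫_{Ω_l} |z−γ_l|^{-2} dμ(z) = 0. -/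
open MeasureTheory Filter Topology
open scoped ENNReal NNReal

noncomputable section

/-- If `∫_{Ω_l} v_l/|z-γ_l|² dμ → 0` and the same quantities are uniformly bounded, then
for every norm-bounded sequence `(a^{(n)})` in `ℓ²_v` whose entries tend to zero
coordinatewise, `∑_l |a^{(n)}_l|² v_l² ∫_{Ω_l}|z-γ_l|⁻² dμ → 0`. -/
theorem diagonal_term_tendsto_zero (γ : ℕ → ℂ) (v : ℕ → ℝ)
    (hγ_inj : Function.Injective γ) (hγ_ne : ∀ n, γ n ≠ 0)
    (hγ_mono : Monotone fun n => ‖γ n‖) (hγ_sparse : Sparse γ)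
    (hv : ∀ n, 0 < v n) (hadm : Admissible γ v)
    (μ : Measure ℂ) (hμΓ : μ (Set.range γ) = 0)
    (hlim : Tendsto (fun l => localTerm γ v μ l) atTop (𝓝 0))
    (hsup : (⨆ l, localTerm γ v μ l) < ⊤)
    (a : ℕ → ℕ → ℂ) (ha : ∀ n, MemL2v v (a n))
    (hbdd : ∃ M : ℝ, ∀ n, normSqV v (a n) ≤ M)
    (hpt : ∀ l, Tendsto (fun n => a n l) atTop (𝓝 0)) :
    Tendsto (fun n => ∑' l, ENNReal.ofReal (‖a n l‖ ^ 2 * v l ^ 2) *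
        ∫⁻ z in Omega γ l, ENNReal.ofReal (1 / ‖z - γ l‖ ^ 2) ∂μ) atTop (𝓝 0) := by
  obtain ⟨M, hM⟩ := hbdd
  -- rewrite each term through the local quantity
  have hterm : ∀ n l, ENNReal.ofReal (‖a n l‖ ^ 2 * v l ^ 2) *
      ∫⁻ z in Omega γ l, ENNReal.ofReal (1 / ‖z - γ l‖ ^ 2) ∂μ
      = ENNReal.ofReal (‖a n l‖ ^ 2 * v l) * localTerm γ v μ l := by
    intro n l
    have h1 : localTerm γ v μ l = ENNReal.ofReal (v l) *
        ∫⁻ z in Omega γ l, ENNReal.ofReal (1 / ‖z - γ l‖ ^ 2) ∂μ := by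
      unfold localTerm
      rw [← lintegral_const_mul' _ _ ENNReal.ofReal_ne_top]
      refine lintegral_congr fun z => ?_
      rw [← ENNReal.ofReal_mul (hv l).le, mul_one_div]
    rw [h1, ← mul_assoc, ← ENNReal.ofReal_mul (mul_nonneg (sq_nonneg _) (hv l).le)]
    congr 2
    ring
  simp_rw [hterm]
  have hfin : ∀ l, localTerm γ v μ l ≠ ⊤ := fun l =>
    ((le_iSup (fun l => localTerm γ v μ l) l).trans_lt hsup).ne
  have hsum : ∀ n, ∑' l, ENNReal.ofReal (‖a n l‖ ^ 2 * v l) ≤ ENNReal.ofReal M := by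
    intro n
    rw [← ENNReal.ofReal_tsum_of_nonneg
      (fun l => mul_nonneg (sq_nonneg _) (hv l).le) (ha n)]
    exact ENNReal.ofReal_le_ofReal (hM n)
  rw [ENNReal.tendsto_nhds_zero]
  intro ε hε
  have hε2 : 0 < ε / 2 := ENNReal.half_pos hε.ne'
  have hδ : 0 < ε / 2 / (ENNReal.ofReal M + 1) :=
    ENNReal.div_pos hε2.ne' (by simp)
  obtain ⟨N, hN⟩ := eventually_atTop.1 (ENNReal.tendsto_nhds_zero.1 hlim _ hδ)
  have hhead : Tendsto (fun n => ∑ l ∈ Finset.range N,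
      ENNReal.ofReal (‖a n l‖ ^ 2 * v l) * localTerm γ v μ l) atTop (𝓝 0) := by
    have : ∀ l ∈ Finset.range N, Tendsto (fun n =>
        ENNReal.ofReal (‖a n l‖ ^ 2 * v l) * localTerm γ v μ l) atTop (𝓝 0) := by
      intro l _
      have h1 : Tendsto (fun n => ‖a n l‖ ^ 2 * v l) atTop (𝓝 0) := by
        simpa using ((hpt l).norm.pow 2).mul_const (v l)
      have h2 := ENNReal.tendsto_ofReal h1
      simpa using ENNReal.Tendsto.mul_const h2 (Or.inr (hfin l))
    simpa using tendsto_finsetSum _ this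
  filter_upwards [ENNReal.tendsto_nhds_zero.1 hhead _ hε2] with n hn
  rw [← ENNReal.summable.sum_add_tsum_nat_add' (k := N)]
  rw [← ENNReal.add_halves ε]
  refine add_le_add hn ?_
  calc ∑' l, ENNReal.ofReal (‖a n (l + N)‖ ^ 2 * v (l + N)) * localTerm γ v μ (l + N)
      ≤ ∑' l, ENNReal.ofReal (‖a n (l + N)‖ ^ 2 * v (l + N)) *
          (ε / 2 / (ENNReal.ofReal M + 1)) :=
        ENNReal.tsum_le_tsum fun l => by gcongr; exact hN _ (Nat.le_add_left _ _)
    _ = (∑' l, ENNReal.ofReal (‖a n (l + N)‖ ^ 2 * v (l + N))) *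
          (ε / 2 / (ENNReal.ofReal M + 1)) := ENNReal.tsum_mul_right
    _ ≤ (ENNReal.ofReal M + 1) * (ε / 2 / (ENNReal.ofReal M + 1)) := by
        gcongr
        refine le_trans ?_ ((hsum n).trans le_self_add)
        exact ENNReal.tsum_comp_le_tsum_of_injective (add_left_injective N)
          (fun l => ENNReal.ofReal (‖a n l‖ ^ 2 * v l))
    _ ≤ ε / 2 := by
        exact ENNReal.mul_div_le
end
end
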